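/- Let S ⊆ {-1,0,1}^d \ {0} be a mostly symmetric step set with negative drift (B(1) - A(1) < 0) that takes a step forwards and backwards in each coordinate. Set ρ = √(A(1)/B(1)) and C_ρ = [S(1,…,1,ρ)·ρ / (2 π^{d/2} A(1) (1 - 1/ρ)^2)] · √( S(1,…,1,ρ)^d / (ρ · B_1(1,…,1,ρ) ··· B_{d-1}(1,…,1,ρ) · B(1)) ), and let C_{-ρ} be obtained from C_ρ by replacing ρ with -ρ. If Q(ẑ) ≠ 0 (there are steps with d-th coordinate 0), then s_n = S(1,…,1,ρ)^n · n^{-d/2-1} · C_ρ · (1 + O(1/n)). If Q(ẑ) = 0, then s_n = n^{-d/2-1} · [ S(1,…,1,ρ)^n · C_ρ + S(1,…,1,-ρ)^n · C_{-ρ} ] · (1 + O(1/n)). -/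

import Mathlib

open Finset Filter
open scoped Classical

noncomputable section

/-- Total weight of walks of length `n` with steps in `S` (weighted by `w`),
starting at the origin and never leaving `ℕ^d`. -/
def walkWeight (d : ℕ) (S : Finset (Fin d → ℤ)) (w : (Fin d → ℤ) → ℝ) (n : ℕ) : ℝ :=
  ∑ f : Fin n → {i // i ∈ S},
    if ∀ m : ℕ, m ≤ n → ∀ j : Fin d,
        0 ≤ ∑ k ∈ Finset.univ.filter (fun k : Fin n => (k : ℕ) < m), ((f k : Fin d → ℤ) j)
    then ∏ k : Fin n, w (f k) else 0

/-- The step set `S` (with weights `w`) is symmetric over the `k`-th coordinate axis. -/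
def SymmetricAxis (d : ℕ) (S : Finset (Fin d → ℤ)) (w : (Fin d → ℤ) → ℝ) (k : Fin d) : Prop :=
  ∀ i ∈ S, Function.update i k (-(i k)) ∈ S ∧ w (Function.update i k (-(i k))) = w i

/-- `S(1,…,1,r)`: the characteristic polynomial evaluated with the first `d`
coordinates equal to `1` and the last coordinate equal to `r`. -/
def SAt (d : ℕ) (S : Finset (Fin (d + 1) → ℤ)) (w : (Fin (d + 1) → ℤ) → ℝ) (r : ℝ) : ℝ :=
  ∑ i ∈ S, w i * r ^ (i (Fin.last d))

/-- `B_k(1,…,1,r)`: the coefficient `[z_k] S(z)` evaluated with the remaining first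
`d` coordinates equal to `1` and the last coordinate equal to `r`. -/
def BkAt (d : ℕ) (S : Finset (Fin (d + 1) → ℤ)) (w : (Fin (d + 1) → ℤ) → ℝ)
    (k : Fin d) (r : ℝ) : ℝ :=
  ∑ i ∈ S.filter fun i => i (Fin.castSucc k) = 1, w i * r ^ (i (Fin.last d))

/-- The constant `C_ρ` of the negative drift asymptotics (with `ρ` replaced by `r`),
for a mostly symmetric step set in dimension `d+1`. -/
def Cconst (d : ℕ) (S : Finset (Fin (d + 1) → ℤ)) (w : (Fin (d + 1) → ℤ) → ℝ) (r : ℝ) : ℝ :=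
  (SAt d S w r * r /
      (2 * Real.pi ^ (((d : ℝ) + 1) / 2) *
        (∑ i ∈ S.filter fun i => i (Fin.last d) = -1, w i) * (1 - 1 / r) ^ 2)) *
    Real.sqrt (SAt d S w r ^ (d + 1) /
      (r * (∏ k : Fin d, BkAt d S w k r) *
        ∑ i ∈ S.filter fun i => i (Fin.last d) = 1, w i))


def Wr (d : ℕ) (S : Finset (Fin d → ℤ)) (w : (Fin d → ℤ) → ℝ) : ℕ → (Fin d → ℤ) → ℝ
  | 0, x => if ∀ j, 0 ≤ x j then 1 else 0
  | n + 1, x => if ∀ j, 0 ≤ x j then ∑ i ∈ S, w i * Wr d S w n (x + i) else 0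

def WWx (d : ℕ) (S : Finset (Fin d → ℤ)) (w : (Fin d → ℤ) → ℝ) (n : ℕ) (x : Fin d → ℤ) : ℝ :=
  ∑ f : Fin n → {i // i ∈ S},
    if ∀ m : ℕ, m ≤ n → ∀ j : Fin d,
        0 ≤ x j + ∑ k ∈ Finset.univ.filter (fun k : Fin n => (k : ℕ) < m), ((f k : Fin d → ℤ) j)
    then ∏ k : Fin n, w (f k) else 0

theorem cons_cond (d : ℕ) (S : Finset (Fin d → ℤ)) (n : ℕ) (x : Fin d → ℤ)
    (a : {i // i ∈ S}) (g : Fin n → {i // i ∈ S}) :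
    (∀ m : ℕ, m ≤ n + 1 → ∀ j : Fin d,
        0 ≤ x j + ∑ k ∈ Finset.univ.filter (fun k : Fin (n+1) => (k : ℕ) < m),
          (((Fin.cons a g : Fin (n+1) → {i // i ∈ S}) k : Fin d → ℤ) j)) ↔
    (∀ j, 0 ≤ x j) ∧ (∀ m : ℕ, m ≤ n → ∀ j : Fin d,
        0 ≤ (x + a.1) j + ∑ k ∈ Finset.univ.filter (fun k : Fin n => (k : ℕ) < m),
          ((g k : Fin d → ℤ) j)) := by
  have key : ∀ m j, ∑ k ∈ Finset.univ.filter (fun k : Fin (n+1) => (k : ℕ) < m + 1),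
          (((Fin.cons a g : Fin (n+1) → {i // i ∈ S}) k : Fin d → ℤ) j)
        = a.1 j + ∑ k ∈ Finset.univ.filter (fun k : Fin n => (k : ℕ) < m),
          ((g k : Fin d → ℤ) j) := by
    intro m j
    rw [Finset.sum_filter, Finset.sum_filter, Fin.sum_univ_succ]
    simp
  constructor
  · intro h
    refine ⟨fun j => by simpa using h 0 (by omega) j, fun m hm j => ?_⟩
    have := h (m+1) (by omega) j
    rw [key] at this
    simp only [Pi.add_apply]
    linarith
  · rintro ⟨h0, h⟩ m hm j
    rcases m with _ | m
    · simpa using h0 j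
    · rw [key]
      have := h m (by omega) j
      simp only [Pi.add_apply] at this
      linarith

theorem WWx_eq (d : ℕ) (S : Finset (Fin d → ℤ)) (w : (Fin d → ℤ) → ℝ) (n : ℕ) :
    ∀ x, WWx d S w n x = Wr d S w n x := by
  induction n with
  | zero => intro x; simp [WWx, Wr]
  | succ n ih =>
    intro x
    rw [WWx, Wr]
    rw [← (Fin.consEquiv (fun _ : Fin (n+1) => {i // i ∈ S})).sum_comp, Fintype.sum_prod_type]
    by_cases hx : ∀ j, 0 ≤ x j
    · rw [if_pos hx, ← Finset.sum_coe_sort S]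
      refine Finset.sum_congr rfl fun a _ => ?_
      rw [← ih, WWx, Finset.mul_sum]
      refine Finset.sum_congr rfl fun g _ => ?_
      rw [show (Fin.consEquiv (fun _ : Fin (n+1) => {i // i ∈ S})) (a, g) = (Fin.cons a g : Fin (n+1) → {i // i ∈ S}) from rfl]
      rw [if_congr (cons_cond d S n x a g) rfl rfl]
      simp only [hx, implies_true, true_and, Fin.prod_univ_succ, Fin.cons_zero, Fin.cons_succ]
      split_ifs <;> simp
    · rw [if_neg hx]
      refine Finset.sum_eq_zero fun a _ => Finset.sum_eq_zero fun g _ => ?_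
      rw [show (Fin.consEquiv (fun _ : Fin (n+1) => {i // i ∈ S})) (a, g) = (Fin.cons a g : Fin (n+1) → {i // i ∈ S}) from rfl]
      rw [if_congr (cons_cond d S n x a g) rfl rfl, if_neg (fun h => hx h.1)]

theorem walkWeight_eq_Wr (d : ℕ) (S : Finset (Fin d → ℤ)) (w : (Fin d → ℤ) → ℝ) (n : ℕ) :
    walkWeight d S w n = Wr d S w n 0 := by
  rw [← WWx_eq]; simp [walkWeight, WWx]

def Vr (a q b : ℝ) : ℕ → ℤ → ℝ
  | 0, y => if 0 ≤ y then 1 else 0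
  | n + 1, y => if 0 ≤ y then a * Vr a q b n (y - 1) + q * Vr a q b n y + b * Vr a q b n (y + 1) else 0

theorem Vr_neg (a q b : ℝ) (n : ℕ) (y : ℤ) (hy : y < 0) : Vr a q b n y = 0 := by
  cases n <;> simp [Vr, not_le.mpr hy]

theorem Vr_abs_le (a q b A Q B : ℝ) (ha : |a| ≤ A) (hq : |q| ≤ Q) (hb : |b| ≤ B) (n : ℕ) :
    ∀ y, |Vr a q b n y| ≤ Vr A Q B n y := by
  induction n with
  | zero => intro y; simp only [Vr]; split_ifs <;> simp
  | succ n ih =>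
    intro y
    simp only [Vr]
    split_ifs
    · refine (abs_add_le _ _).trans (add_le_add ((abs_add_le _ _).trans (add_le_add ?_ ?_)) ?_)
      all_goals
        rw [abs_mul]
        exact mul_le_mul (by assumption) (ih _) (abs_nonneg _) ((abs_nonneg _).trans (by assumption))
    · simp

theorem Vr_crude (a q b r : ℝ) (ha : 0 ≤ a) (hq : 0 ≤ q) (hb : 0 ≤ b) (hr : 1 ≤ r) (n : ℕ) :
    ∀ y : ℤ, |Vr a q b n y| ≤ (a / r + q + b * r) ^ n * r ^ y := by
  have hr0 : r ≠ 0 := by positivity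
  have hp : ∀ y : ℤ, 0 < r ^ y := fun y => by positivity
  induction n with
  | zero =>
    intro y; simp only [Vr]; split_ifs with h
    · simpa using one_le_zpow₀ hr h
    · simpa using (hp y).le
  | succ n ih =>
    intro y
    simp only [Vr]
    split_ifs
    · have h1 := ih (y-1)
      have h2 := ih y
      have h3 := ih (y+1)
      rw [zpow_sub_one₀ hr0] at h1
      rw [zpow_add_one₀ hr0] at h3
      calc _ ≤ a * |Vr a q b n (y-1)| + q * |Vr a q b n y| + b * |Vr a q b n (y+1)| := by
            refine (abs_add_le _ _).trans (add_le_add ((abs_add_le _ _).trans (add_le_add ?_ ?_)) ?_)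
            all_goals
              rw [abs_mul]
              exact le_of_eq (by rw [abs_of_nonneg (by assumption)])
        _ ≤ a * ((a / r + q + b * r) ^ n * (r ^ y * r⁻¹)) + q * ((a / r + q + b * r) ^ n * r ^ y) + b * ((a / r + q + b * r) ^ n * (r ^ y * r)) := by gcongr
        _ = _ := by rw [pow_succ]; field_simp
    · simp only [abs_zero]
      have := hp y
      positivity

def Ux (n : ℤ) (y : ℝ) : ℝ := (Polynomial.Chebyshev.U ℝ n).eval y

theorem Ux_rec (n : ℤ) (y : ℝ) : Ux (n + 1) y + Ux (n - 1) y = 2 * y * Ux n y := by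
  simp only [Ux]
  rw [Polynomial.Chebyshev.U_add_one]
  simp

theorem Ux_neg_one (y : ℝ) : Ux (-1) y = 0 := by simp [Ux]
theorem Ux_zero (y : ℝ) : Ux 0 y = 1 := by simp [Ux]
theorem Ux_one (y : ℝ) : Ux 1 y = 2 * y := by simp [Ux]

theorem Ux_continuous (n : ℤ) : Continuous (Ux n) := by
  unfold Ux; exact Polynomial.continuous _

theorem Ux_step (n : ℤ) (θ : ℝ) : Ux (n + 2) (Real.cos θ) = Ux n (Real.cos θ) + 2 * Real.cos ((n + 2) * θ) := by
  have h := congrArg (fun p => Polynomial.eval (Real.cos θ) p) (Polynomial.Chebyshev.two_mul_T_eq_U_sub_U ℝ n)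
  simp only [Polynomial.eval_mul, Polynomial.eval_sub, Polynomial.Chebyshev.T_real_cos] at h
  simp only [Ux]
  have h2 : Polynomial.eval (Real.cos θ) (2 : Polynomial ℝ) = 2 := by simp
  rw [h2] at h
  push_cast at h
  linarith

theorem Jint_cos (m : ℝ) (k : ℤ) (hk : (k : ℝ) = m) (hm : m ≠ 0) :
    ∫ θ in (-(Real.pi / 2))..(Real.pi / 2), (Real.cos (m * θ) + Real.cos (m * (θ + Real.pi))) = 0 := by
  have hd : ∀ θ ∈ Set.uIcc (-(Real.pi / 2)) (Real.pi / 2),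
      HasDerivAt (fun θ => Real.sin (m * θ) / m + Real.sin (m * (θ + Real.pi)) / m)
      (Real.cos (m * θ) + Real.cos (m * (θ + Real.pi))) θ := by
    intro θ _
    have h1 : HasDerivAt (fun θ : ℝ => m * θ) m θ := by
      simpa using (hasDerivAt_id θ).const_mul m
    have h2 : HasDerivAt (fun θ : ℝ => m * (θ + Real.pi)) m θ := by
      simpa using ((hasDerivAt_id θ).add_const Real.pi).const_mul m
    have := (h1.sin.div_const m).add (h2.sin.div_const m)
    exact this.congr_deriv (by rw [mul_div_cancel_right₀ _ hm, mul_div_cancel_right₀ _ hm])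
  rw [intervalIntegral.integral_eq_sub_of_hasDerivAt hd
    (Continuous.intervalIntegrable (by fun_prop) _ _)]
  have e1 : m * (Real.pi / 2 + Real.pi) = m * (Real.pi) + m * (Real.pi / 2) := by ring
  have e2 : m * (-(Real.pi / 2)) = - (m * (Real.pi / 2)) := by ring
  have e3 : m * (-(Real.pi / 2) + Real.pi) = m * (Real.pi / 2) := by ring
  have e4 : m * (Real.pi / 2 + Real.pi) = 2 * (m * Real.pi) - m * (Real.pi / 2) := by ring
  have s2 : Real.sin (2 * (m * Real.pi)) = 0 := by
    rw [Real.sin_two_mul, ← hk, Real.sin_int_mul_pi]; ring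
  have c2 : Real.cos (2 * (m * Real.pi)) = 1 := by
    rw [Real.cos_two_mul', ← hk, Real.sin_int_mul_pi]
    have := Real.sin_sq_add_cos_sq ((k:ℝ) * Real.pi)
    rw [Real.sin_int_mul_pi] at this
    linarith
  rw [e4, e2, e3, Real.sin_sub, s2, c2, Real.sin_neg]
  ring

theorem Jint (n : ℕ) : ∫ θ in (-(Real.pi / 2))..(Real.pi / 2),
    ((1 + Real.cos θ) * Ux n (Real.cos θ) + (1 - Real.cos θ) * Ux n (-Real.cos θ)) = 2 * Real.pi := by
  induction n using Nat.strong_induction_on with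
  | _ n ih =>
    rcases n with _ | _ | n
    · simp only [Nat.cast_zero, Ux_zero]
      have : ∀ θ : ℝ, (1 + Real.cos θ) * 1 + (1 - Real.cos θ) * 1 = 2 := fun θ => by ring
      simp only [this, intervalIntegral.integral_const, smul_eq_mul]
      ring
    · simp only [zero_add, Nat.cast_one, Ux_one]
      have : ∀ θ : ℝ, (1 + Real.cos θ) * (2 * Real.cos θ) + (1 - Real.cos θ) * (2 * -Real.cos θ) = 4 * Real.cos θ ^ 2 := fun θ => by ring
      simp only [this, intervalIntegral.integral_const_mul, integral_cos_sq]
      simp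
      ring
    · have hpt : ∀ θ : ℝ, ((1 + Real.cos θ) * Ux (n + 1 + 1 : ℕ) (Real.cos θ) + (1 - Real.cos θ) * Ux (n+1+1 : ℕ) (-Real.cos θ))
          = ((1 + Real.cos θ) * Ux n (Real.cos θ) + (1 - Real.cos θ) * Ux n (-Real.cos θ))
          + (2 * (Real.cos ((n + 2 : ℝ) * θ) + Real.cos ((n + 2 : ℝ) * (θ + Real.pi)))
          + ((Real.cos ((n + 3 : ℝ) * θ) + Real.cos ((n + 3 : ℝ) * (θ + Real.pi)))
          + (Real.cos ((n + 1 : ℝ) * θ) + Real.cos ((n + 1 : ℝ) * (θ + Real.pi))))) := by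
        intro θ
        have h1 := Ux_step n θ
        have h2 := Ux_step n (θ + Real.pi)
        rw [Real.cos_add_pi] at h2
        rw [show ((n + 1 + 1 : ℕ) : ℤ) = (n : ℤ) + 2 by push_cast; ring, h1, h2]
        have k1 : ∀ θ : ℝ, Real.cos ((n + 3 : ℝ) * θ) + Real.cos ((n + 1 : ℝ) * θ) = 2 * Real.cos θ * Real.cos ((n + 2 : ℝ) * θ) := by
          intro θ
          rw [show (n + 3 : ℝ) * θ = (n + 2 : ℝ) * θ + θ by ring, show (n + 1 : ℝ) * θ = (n + 2 : ℝ) * θ - θ by ring, Real.cos_add, Real.cos_sub]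
          ring
        have k2 := k1 (θ + Real.pi)
        rw [Real.cos_add_pi] at k2
        have k3 := k1 θ
        push_cast
        linarith
      have c0 : Continuous (fun θ : ℝ => ((1 + Real.cos θ) * Ux n (Real.cos θ) + (1 - Real.cos θ) * Ux n (-Real.cos θ))) := by
        have := Ux_continuous n
        fun_prop
      simp only [hpt]
      set G : ℝ → ℝ := (fun θ : ℝ => ((1 + Real.cos θ) * Ux n (Real.cos θ) + (1 - Real.cos θ) * Ux n (-Real.cos θ))) with hG
      have ih' : ∫ θ in (-(Real.pi / 2))..(Real.pi / 2), G θ = 2 * Real.pi := ih n (by omega)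
      change ∫ θ in (-(Real.pi / 2))..(Real.pi / 2), (G θ + (2 * (Real.cos ((n + 2 : ℝ) * θ) + Real.cos ((n + 2 : ℝ) * (θ + Real.pi)))
          + ((Real.cos ((n + 3 : ℝ) * θ) + Real.cos ((n + 3 : ℝ) * (θ + Real.pi)))
          + (Real.cos ((n + 1 : ℝ) * θ) + Real.cos ((n + 1 : ℝ) * (θ + Real.pi)))))) = _
      clear_value G
      rw [intervalIntegral.integral_add, intervalIntegral.integral_add, intervalIntegral.integral_add,
        intervalIntegral.integral_const_mul, ih', Jint_cos (n+2) (n+2) (by push_cast; ring) (by positivity),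
        Jint_cos (n+3) (n+3) (by push_cast; ring) (by positivity), Jint_cos (n+1) (n+1) (by push_cast; ring) (by positivity)]
      · ring
      all_goals exact Continuous.intervalIntegrable (by fun_prop) _ _

def cf {d : ℕ} (i : Fin (d + 1) → ℤ) (y : Fin d → ℝ) : ℝ :=
  ∏ k : Fin d, if i k.castSucc = 0 then 1 else y k

def co (d : ℕ) (S : Finset (Fin (d + 1) → ℤ)) (w : (Fin (d + 1) → ℤ) → ℝ) (e : ℤ) (y : Fin d → ℝ) : ℝ :=
  ∑ i ∈ S.filter (fun i => i (Fin.last d) = e), w i * cf i y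

def boxm (d : ℕ) : MeasureTheory.Measure (Fin d → ℝ) :=
  MeasureTheory.Measure.pi (fun _ => MeasureTheory.volume.restrict (Set.Icc (-(Real.pi / 2)) (Real.pi / 2)))

theorem boxm_eq (d : ℕ) : boxm d = MeasureTheory.volume.restrict (Set.Icc (fun _ => -(Real.pi / 2)) (fun _ => Real.pi / 2)) := by
  rw [boxm, ← MeasureTheory.Measure.restrict_pi_pi, ← Set.pi_univ_Icc]
  rfl

theorem boxm_integrable (d : ℕ) (h : (Fin d → ℝ) → ℝ) (hc : Continuous h) :
    MeasureTheory.Integrable h (boxm d) := by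
  rw [boxm_eq]
  exact hc.continuousOn.integrableOn_compact isCompact_Icc

def sg (b : Bool) : ℝ := if b then 1 else -1

def EE (d : ℕ) (h : (Fin d → ℝ) → ℝ) : ℝ :=
  ((2 * Real.pi) ^ d)⁻¹ * ∑ ε : Fin d → Bool, ∫ θ, h (fun k => sg (ε k) * Real.cos (θ k)) ∂(boxm d)

theorem EE_sum (d : ℕ) {ι : Type*} (s : Finset ι) (c : ι → ℝ) (h : ι → (Fin d → ℝ) → ℝ) (hc : ∀ i ∈ s, Continuous (h i)) :
    EE d (fun y => ∑ i ∈ s, c i * h i y) = ∑ i ∈ s, c i * EE d (h i) := by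
  simp only [EE]
  simp only [Finset.mul_sum]
  rw [Finset.sum_comm]
  refine Finset.sum_congr rfl fun ε _ => ?_
  rw [MeasureTheory.integral_finsetSum]
  · rw [Finset.mul_sum]
    refine Finset.sum_congr rfl fun i hi => ?_
    rw [MeasureTheory.integral_const_mul]; ring
  · intro i hi
    apply boxm_integrable
    have := hc i hi
    fun_prop

theorem EE_base (d : ℕ) (x : Fin d → ℤ) (hx : ∀ k, 0 ≤ x k) :
    EE d (fun y => ∏ k, ((1 + y k) * Ux (x k) (y k))) = 1 := by
  simp only [EE]
  have h1 : ∀ ε : Fin d → Bool, ∫ θ, ∏ k, ((1 + sg (ε k) * Real.cos (θ k)) * Ux (x k) (sg (ε k) * Real.cos (θ k))) ∂(boxm d)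
      = ∏ k, ∫ t in Set.Icc (-(Real.pi / 2)) (Real.pi / 2), (1 + sg (ε k) * Real.cos t) * Ux (x k) (sg (ε k) * Real.cos t) := by
    intro ε
    rw [boxm]
    exact MeasureTheory.integral_fintype_prod_eq_prod (fun k t => (1 + sg (ε k) * Real.cos t) * Ux (x k) (sg (ε k) * Real.cos t))
  simp only [h1]
  have h2 := Finset.prod_univ_sum (fun _ : Fin d => (Finset.univ : Finset Bool)) (fun k (b : Bool) =>
    ∫ t in Set.Icc (-(Real.pi / 2)) (Real.pi / 2), (1 + sg b * Real.cos t) * Ux (x k) (sg b * Real.cos t))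
  rw [Fintype.piFinset_univ] at h2
  rw [← h2]
  have h3 : ∀ k, ∑ b : Bool, ∫ t in Set.Icc (-(Real.pi / 2)) (Real.pi / 2), (1 + sg b * Real.cos t) * Ux (x k) (sg b * Real.cos t) = 2 * Real.pi := by
    intro k
    obtain ⟨n, hn⟩ := Int.eq_ofNat_of_zero_le (hx k)
    have hU := Ux_continuous (x k)
    rw [Fintype.sum_bool, ← Jint n, intervalIntegral.integral_of_le (by linarith [Real.pi_pos]), ← MeasureTheory.integral_Icc_eq_integral_Ioc,
      ← MeasureTheory.integral_add]
    · simp only [sg, hn]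
      congr 1
      ext t
      simp only [if_true, Bool.false_eq_true, if_false, one_mul, neg_one_mul]
      ring
    all_goals
      refine Continuous.integrableOn_Icc (by fun_prop)
  simp only [h3, Finset.prod_const, Finset.card_univ, Fintype.card_fin]
  have : (2 * Real.pi) ^ d ≠ 0 := by have := Real.pi_pos; positivity
  field_simp

theorem sym_half (d : ℕ) (S : Finset (Fin (d + 1) → ℤ)) (w : (Fin (d + 1) → ℤ) → ℝ) (k : Fin d)
    (hsym : SymmetricAxis (d + 1) S w (Fin.castSucc k))
    (F : (Fin (d + 1) → ℤ) → ℝ) :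
    ∑ i ∈ S, w i * F i = ∑ i ∈ S, w i * F (Function.update i k.castSucc (-(i k.castSucc))) := by
  refine Finset.sum_nbij' (fun i => Function.update i k.castSucc (-(i k.castSucc)))
    (fun i => Function.update i k.castSucc (-(i k.castSucc))) (fun i hi => (hsym i hi).1) (fun i hi => (hsym i hi).1) ?_ ?_ ?_
  · intro i hi; simp
  · intro i hi; simp
  · intro i hi; simp [(hsym i hi).2]

theorem sym_sum (d : ℕ) (S : Finset (Fin (d + 1) → ℤ)) (w : (Fin (d + 1) → ℤ) → ℝ)
    (hstep : ∀ i ∈ S, (∀ j, i j = -1 ∨ i j = 0 ∨ i j = 1) ∧ i ≠ 0)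
    (hsym : ∀ k : Fin d, SymmetricAxis (d + 1) S w (Fin.castSucc k))
    (x : Fin d → ℤ) (y : Fin d → ℝ) (H : ℤ → ℝ) (T : Finset (Fin d)) :
    ∑ i ∈ S, w i * ((∏ k, Ux (x k + i k.castSucc) (y k)) * H (i (Fin.last d))) =
    ∑ i ∈ S, w i * ((∏ k, if k ∈ T then (if i k.castSucc = 0 then 1 else y k) * Ux (x k) (y k) else Ux (x k + i k.castSucc) (y k)) * H (i (Fin.last d))) := by
  induction T using Finset.induction_on with
  | empty => simp
  | insert m T hm ih =>
    rw [ih]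
    set R : (Fin (d+1) → ℤ) → ℝ := fun i => (∏ k ∈ Finset.univ.erase m, if k ∈ T then (if i k.castSucc = 0 then 1 else y k) * Ux (x k) (y k) else Ux (x k + i k.castSucc) (y k)) * H (i (Fin.last d)) with hR
    have e1 : ∀ i : Fin (d+1) → ℤ, ((∏ k, if k ∈ T then (if i k.castSucc = 0 then 1 else y k) * Ux (x k) (y k) else Ux (x k + i k.castSucc) (y k)) * H (i (Fin.last d))) = Ux (x m + i m.castSucc) (y m) * R i := by
      intro i
      rw [← Finset.mul_prod_erase _ _ (Finset.mem_univ m), if_neg hm, hR]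
      ring
    have e2 : ∀ i : Fin (d+1) → ℤ, ((∏ k, if k ∈ insert m T then (if i k.castSucc = 0 then 1 else y k) * Ux (x k) (y k) else Ux (x k + i k.castSucc) (y k)) * H (i (Fin.last d))) = (if i m.castSucc = 0 then 1 else y m) * Ux (x m) (y m) * R i := by
      intro i
      rw [← Finset.mul_prod_erase _ _ (Finset.mem_univ m), if_pos (by simp), hR]
      have : ∏ k ∈ Finset.univ.erase m, (if k ∈ insert m T then (if i k.castSucc = 0 then 1 else y k) * Ux (x k) (y k) else Ux (x k + i k.castSucc) (y k))
        = ∏ k ∈ Finset.univ.erase m, (if k ∈ T then (if i k.castSucc = 0 then 1 else y k) * Ux (x k) (y k) else Ux (x k + i k.castSucc) (y k)) := by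
        refine Finset.prod_congr rfl fun k hk => ?_
        have : k ≠ m := (Finset.mem_erase.mp hk).1
        simp [this]
      rw [this]; ring
    have e3 : ∀ i : Fin (d+1) → ℤ, R (Function.update i m.castSucc (-(i m.castSucc))) = R i := by
      intro i
      simp only [hR]
      congr 1
      · refine Finset.prod_congr rfl fun k hk => ?_
        have : k.castSucc ≠ m.castSucc := fun h => (Finset.mem_erase.mp hk).1 (Fin.castSucc_injective _ h)
        rw [Function.update_of_ne this]
      · rw [Function.update_of_ne (Fin.castSucc_lt_last m).ne']
    simp only [e1, e2]
    have h1 := sym_half d S w m (hsym m) (fun i => Ux (x m + i m.castSucc) (y m) * R i)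
    simp only [e3, Function.update_self] at h1
    have h2 : ∑ i ∈ S, w i * ((if i m.castSucc = 0 then 1 else y m) * Ux (x m) (y m) * R i)
      = (1/2) * (∑ i ∈ S, w i * (Ux (x m + i m.castSucc) (y m) * R i) + ∑ i ∈ S, w i * (Ux (x m + -i m.castSucc) (y m) * R i)) := by
      rw [← Finset.sum_add_distrib, Finset.mul_sum]
      refine Finset.sum_congr rfl fun i hi => ?_
      have hr := Ux_rec (x m) (y m)
      rw [sub_eq_add_neg] at hr
      have : (if i m.castSucc = 0 then 1 else y m) * Ux (x m) (y m) = (1/2) * (Ux (x m + i m.castSucc) (y m) + Ux (x m + -i m.castSucc) (y m)) := by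
        rcases (hstep i hi).1 m.castSucc with h | h | h
        · rw [h, if_neg (by norm_num), neg_neg]; linarith
        · rw [h, if_pos rfl]; simp; ring
        · rw [h, if_neg (by norm_num)]; linarith
      rw [this]; ring
    rw [h2, ← h1]; ring

theorem co_sum (d : ℕ) (S : Finset (Fin (d + 1) → ℤ)) (w : (Fin (d + 1) → ℤ) → ℝ)
    (hstep : ∀ i ∈ S, (∀ j, i j = -1 ∨ i j = 0 ∨ i j = 1) ∧ i ≠ 0)
    (y : Fin d → ℝ) (H : ℤ → ℝ) :
    ∑ i ∈ S, w i * (cf i y * H (i (Fin.last d))) =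
      co d S w (-1) y * H (-1) + co d S w 0 y * H 0 + co d S w 1 y * H 1 := by
  simp only [co, Finset.sum_mul, Finset.sum_filter]
  rw [← Finset.sum_add_distrib, ← Finset.sum_add_distrib]
  refine Finset.sum_congr rfl fun i hi => ?_
  rcases (hstep i hi).1 (Fin.last d) with h | h | h <;> simp [h] <;> ring

theorem cf_continuous {d : ℕ} (i : Fin (d + 1) → ℤ) : Continuous (cf i) := by
  unfold cf
  refine continuous_finsetProd _ fun k _ => ?_
  split_ifs <;> fun_prop

theorem co_continuous (d : ℕ) (S : Finset (Fin (d + 1) → ℤ)) (w : (Fin (d + 1) → ℤ) → ℝ) (e : ℤ) :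
    Continuous (co d S w e) := by
  unfold co
  refine continuous_finsetSum _ fun i _ => ?_
  have := cf_continuous i
  fun_prop

theorem Vr_continuous (d : ℕ) (a q b : (Fin d → ℝ) → ℝ) (ha : Continuous a) (hq : Continuous q) (hb : Continuous b) (n : ℕ) :
    ∀ y, Continuous (fun z => Vr (a z) (q z) (b z) n y) := by
  induction n with
  | zero => intro y; simp only [Vr]; fun_prop
  | succ n ih =>
    intro y
    simp only [Vr]
    split_ifs
    · have h1 := ih (y-1)
      have h2 := ih y
      have h3 := ih (y+1)
      fun_prop
    · fun_prop

theorem exact_formula (d : ℕ) (S : Finset (Fin (d + 1) → ℤ)) (w : (Fin (d + 1) → ℤ) → ℝ)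
    (hstep : ∀ i ∈ S, (∀ j, i j = -1 ∨ i j = 0 ∨ i j = 1) ∧ i ≠ 0)
    (hsym : ∀ k : Fin d, SymmetricAxis (d + 1) S w (Fin.castSucc k)) (n : ℕ) :
    ∀ x : Fin (d + 1) → ℤ, (∀ j, -1 ≤ x j) → Wr (d + 1) S w n x =
      EE d (fun y => (∏ k, ((1 + y k) * Ux (x k.castSucc) (y k))) *
        Vr (co d S w (-1) y) (co d S w 0 y) (co d S w 1 y) n (x (Fin.last d))) := by
  have hneg : ∀ n, ∀ x : Fin (d + 1) → ℤ, (∀ j, -1 ≤ x j) → (¬ ∀ j, 0 ≤ x j) → 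
      EE d (fun y => (∏ k, ((1 + y k) * Ux (x k.castSucc) (y k))) *
        Vr (co d S w (-1) y) (co d S w 0 y) (co d S w 1 y) n (x (Fin.last d))) = 0 := by
    intro n x hx hn
    push Not at hn
    obtain ⟨j, hj⟩ := hn
    have hj1 : x j = -1 := by have := hx j; omega
    have : (fun y : Fin d → ℝ => (∏ k, ((1 + y k) * Ux (x k.castSucc) (y k))) *
        Vr (co d S w (-1) y) (co d S w 0 y) (co d S w 1 y) n (x (Fin.last d))) = fun _ => 0 := by
      funext y
      induction j using Fin.lastCases with
      | last => rw [Vr_neg _ _ _ _ _ hj, mul_zero]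
      | cast k =>
        rw [Finset.prod_eq_zero (Finset.mem_univ k), zero_mul]
        rw [hj1, Ux_neg_one, mul_zero]
    rw [this]
    simp [EE]
  induction n with
  | zero =>
    intro x hx
    by_cases h : ∀ j, 0 ≤ x j
    · rw [Wr, if_pos h]
      simp only [Vr, if_pos (h (Fin.last d)), mul_one]
      exact (EE_base d (fun k => x k.castSucc) (fun k => h _)).symm
    · rw [hneg _ x hx h, Wr, if_neg h]
  | succ n ih =>
    intro x hx
    by_cases h : ∀ j, 0 ≤ x j
    · rw [Wr, if_pos h]
      have e1 : ∀ i ∈ S, w i * Wr (d+1) S w n (x + i) = w i * EE d (fun y => (∏ k, ((1 + y k) * Ux ((x+i) k.castSucc) (y k))) *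
        Vr (co d S w (-1) y) (co d S w 0 y) (co d S w 1 y) n ((x+i) (Fin.last d))) := by
        intro i hi
        rw [ih (x+i)]
        intro j
        have := h j
        rcases (hstep i hi).1 j with h | h | h <;> simp only [Pi.add_apply, h] <;> omega
      rw [Finset.sum_congr rfl e1, ← EE_sum]
      · congr 1
        funext y
        have h1 := sym_sum d S w hstep hsym (fun k => x k.castSucc) y
          (fun e => Vr (co d S w (-1) y) (co d S w 0 y) (co d S w 1 y) n (x (Fin.last d) + e)) Finset.univ
        simp only [Finset.mem_univ, if_true, Finset.prod_mul_distrib] at h1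
        have h2 := co_sum d S w hstep y
          (fun e => Vr (co d S w (-1) y) (co d S w 0 y) (co d S w 1 y) n (x (Fin.last d) + e))
        simp only [Vr, if_pos (h _), Finset.prod_mul_distrib, Pi.add_apply]
        calc _ = (∏ k, (1 + y k)) * ∑ i ∈ S, w i * ((∏ k, Ux (x k.castSucc + i k.castSucc) (y k)) * Vr (co d S w (-1) y) (co d S w 0 y) (co d S w 1 y) n (x (Fin.last d) + i (Fin.last d))) := by
              rw [Finset.mul_sum]
              refine Finset.sum_congr rfl fun i _ => by ring
          _ = (∏ k, (1 + y k)) * ((∏ k, Ux (x k.castSucc) (y k)) * ∑ i ∈ S, w i * (cf i y * Vr (co d S w (-1) y) (co d S w 0 y) (co d S w 1 y) n (x (Fin.last d) + i (Fin.last d)))) := by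
              rw [h1]
              congr 1
              rw [Finset.mul_sum (s := S)]
              refine Finset.sum_congr rfl fun i _ => by simp only [cf]; ring
          _ = _ := by
              rw [h2, add_zero, ← sub_eq_add_neg]; ring
      · intro i hi
        have h1 := Vr_continuous d _ _ _ (co_continuous d S w (-1)) (co_continuous d S w 0) (co_continuous d S w 1) n ((x+i) (Fin.last d))
        refine Continuous.mul (continuous_finsetProd _ fun k _ => ?_) h1
        have := Ux_continuous ((x+i) k.castSucc)
        fun_prop
    · rw [hneg _ x hx h, Wr, if_neg h]

theorem walk_formula (d : ℕ) (S : Finset (Fin (d + 1) → ℤ)) (w : (Fin (d + 1) → ℤ) → ℝ)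
    (hstep : ∀ i ∈ S, (∀ j, i j = -1 ∨ i j = 0 ∨ i j = 1) ∧ i ≠ 0)
    (hsym : ∀ k : Fin d, SymmetricAxis (d + 1) S w (Fin.castSucc k)) (n : ℕ) :
    walkWeight (d + 1) S w n =
      EE d (fun y => (∏ k, (1 + y k)) *
        Vr (co d S w (-1) y) (co d S w 0 y) (co d S w 1 y) n 0) := by
  rw [walkWeight_eq_Wr, exact_formula d S w hstep hsym n 0 (by simp)]
  simp [Ux_zero]

theorem Ux_sin (n : ℤ) (t : ℝ) : Ux n (Real.cos t) * Real.sin t = Real.sin ((n + 1) * t) :=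
  Polynomial.Chebyshev.U_real_cos t n

theorem int_cos_pi (m : ℕ) (hm : m ≠ 0) : ∫ t in (0:ℝ)..Real.pi, Real.cos (m * t) = 0 := by
  have hm' : (m : ℝ) ≠ 0 := by exact_mod_cast hm
  rw [intervalIntegral.integral_comp_mul_left (fun t => Real.cos t) hm']
  simp [Real.sin_nat_mul_pi]

theorem Zint_zero : ∫ t in (0:ℝ)..Real.pi, Ux 0 (Real.cos t) * Real.sin t ^ 2 = Real.pi / 2 := by
  simp [Ux_zero, integral_sin_sq]

theorem Zint_succ (y : ℕ) : ∫ t in (0:ℝ)..Real.pi, Ux ((y : ℤ) + 1) (Real.cos t) * Real.sin t ^ 2 = 0 := by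
  have h : ∀ t : ℝ, Ux ((y : ℤ) + 1) (Real.cos t) * Real.sin t ^ 2 = (1/2) * Real.cos ((y + 1 : ℕ) * t) - (1/2) * Real.cos ((y + 3 : ℕ) * t) := by
    intro t
    have h1 := Ux_sin (y+1) t
    rw [pow_two, ← mul_assoc, h1]
    push_cast
    rw [show ((y:ℝ) + 1) * t = (y + 1 + 1) * t - t by ring, show ((y:ℝ) + 3) * t = (y + 1 + 1) * t + t by ring, Real.cos_add, Real.cos_sub]
    ring
  simp only [h]
  rw [intervalIntegral.integral_sub (Continuous.intervalIntegrable (by fun_prop) _ _) (Continuous.intervalIntegrable (by fun_prop) _ _),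
    intervalIntegral.integral_const_mul, intervalIntegral.integral_const_mul, int_cos_pi _ (by omega), int_cos_pi _ (by omega)]
  simp

theorem Dpos (x t : ℝ) (hx : |x| < 1) : (1 - |x|) ^ 2 ≤ 1 - 2 * x * Real.cos t + x ^ 2 := by
  have h1 : |x * Real.cos t| ≤ |x| := by
    rw [abs_mul]; exact mul_le_of_le_one_right (abs_nonneg _) (Real.abs_cos_le_one t)
  have h2 := le_abs_self (x * Real.cos t)
  have h3 := sq_abs x
  nlinarith

theorem Dpos' (x t : ℝ) (hx : |x| < 1) : 0 < 1 - 2 * x * Real.cos t + x ^ 2 :=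
  lt_of_lt_of_le (by have : 0 < 1 - |x| := by linarith
                     positivity) (Dpos x t hx)

def Kp (x t : ℝ) : ℝ := Real.sin t ^ 2 / (1 - 2 * x * Real.cos t + x ^ 2)

theorem Kp_continuous (x : ℝ) (hx : |x| < 1) : Continuous (Kp x) := by
  unfold Kp
  exact Continuous.div (by fun_prop) (by fun_prop) (fun t => (Dpos' x t hx).ne')

def Iy (x : ℝ) (y : ℤ) : ℝ := ∫ t in (0:ℝ)..Real.pi, Ux y (Real.cos t) * Kp x t

theorem Iy_bound (x : ℝ) (hx : |x| < 1) (y : ℤ) : |Iy x y| ≤ ((1 - |x|) ^ 2)⁻¹ * Real.pi := by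
  have h := intervalIntegral.norm_integral_le_of_norm_le_const (a := 0) (b := Real.pi)
    (f := fun t => Ux y (Real.cos t) * Kp x t) (C := ((1 - |x|) ^ 2)⁻¹) ?_
  · simpa [Iy, abs_of_pos Real.pi_pos] using h
  · intro t _
    have e : Ux y (Real.cos t) * Kp x t = Real.sin ((y+1) * t) * Real.sin t * (1 - 2 * x * Real.cos t + x ^ 2)⁻¹ := by
      rw [← Ux_sin, Kp]; field_simp
    have hp : 0 < (1 - |x|) ^ 2 := by
      have : 0 < 1 - |x| := by linarith
      positivity
    rw [e, Real.norm_eq_abs, abs_mul, abs_mul, abs_of_pos (inv_pos.mpr (Dpos' x t hx))]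
    calc _ ≤ 1 * 1 * ((1 - |x|) ^ 2)⁻¹ := by
          gcongr
          · exact (inv_pos.mpr (Dpos' x t hx)).le
          · exact Real.abs_sin_le_one _
          · exact Real.abs_sin_le_one _
          · exact Dpos x t hx
      _ = _ := by ring

theorem Iy_rec (x : ℝ) (hx : |x| < 1) (y : ℤ) :
    x * (Iy x (y + 1) + Iy x (y - 1)) = (1 + x ^ 2) * Iy x y - ∫ t in (0:ℝ)..Real.pi, Ux y (Real.cos t) * Real.sin t ^ 2 := by
  have hK := Kp_continuous x hx
  have hU := fun n => Ux_continuous n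
  simp only [Iy]
  have ii : ∀ n, IntervalIntegrable (fun t => Ux n (Real.cos t) * Kp x t) MeasureTheory.volume 0 Real.pi :=
    fun n => Continuous.intervalIntegrable (by have := hU n; fun_prop) _ _
  rw [← intervalIntegral.integral_add (ii _) (ii _), ← intervalIntegral.integral_const_mul, ← intervalIntegral.integral_const_mul,
    ← intervalIntegral.integral_sub ((ii _).const_mul _) (Continuous.intervalIntegrable (by have := hU y; fun_prop) _ _)]
  congr 1
  ext t
  rw [← add_mul, Ux_rec, Kp]
  have := mul_inv_cancel₀ (Dpos' x t hx).ne'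
  rw [div_eq_mul_inv]
  linear_combination (-(Ux y (Real.cos t) * Real.sin t ^ 2)) * this

theorem Iy_eq (x : ℝ) (hx0 : 0 < x) (hx1 : x < 1) (y : ℕ) : Iy x y = Real.pi / 2 * x ^ y := by
  have hx : |x| < 1 := by rwa [abs_of_pos hx0]
  set D : ℕ → ℝ := fun y => Iy x y - Real.pi / 2 * x ^ y with hD
  set M : ℝ := ((1 - |x|) ^ 2)⁻¹ * Real.pi + Real.pi / 2 with hM
  have hI1 : Iy x (-1) = 0 := by simp [Iy, Ux_neg_one]
  have hDb : ∀ y, |D y| ≤ M := by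
    intro y
    have h1 := Iy_bound x hx y
    have h2 : |Real.pi / 2 * x ^ y| ≤ Real.pi / 2 := by
      rw [abs_of_nonneg (by have := Real.pi_pos; positivity)]
      exact mul_le_of_le_one_right (by have := Real.pi_pos; positivity) (pow_le_one₀ hx0.le hx1.le)
    exact (abs_sub _ _).trans (add_le_add h1 h2)
  have r0 : x * D 1 = (1 + x^2) * D 0 := by
    have := Iy_rec x hx 0
    rw [Zint_zero] at this
    simp only [zero_add, zero_sub, hI1] at this
    simp only [hD]
    push_cast
    linear_combination this
  have r1 : ∀ y, x * D (y + 2) = (1 + x^2) * D (y+1) - x * D y := by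
    intro y
    have := Iy_rec x hx (y+1)
    rw [Zint_succ] at this
    simp only [hD]
    push_cast
    rw [add_sub_cancel_right, show (y:ℤ) + 1 + 1 = y + 2 by ring] at this
    linear_combination this
  have e : ∀ y, x ^ (y + 1) * (D (y + 1) - x * D y) = D 0 := by
    intro y
    induction y with
    | zero => simp only [zero_add, pow_one]; linear_combination r0
    | succ y ih => rw [← ih, pow_succ]; linear_combination x ^ (y+1) * r1 y
  have hD0 : D 0 = 0 := by
    have hb : ∀ y : ℕ, |D 0| ≤ x ^ y * (2 * M) := by
      intro y
      rw [← e y, abs_mul, abs_of_pos (by positivity)]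
      have h3 : |D (y+1) - x * D y| ≤ 2 * M := by
        refine (abs_sub _ _).trans ?_
        have : |x * D y| ≤ M := by
          rw [abs_mul, abs_of_pos hx0]
          exact (mul_le_of_le_one_left (abs_nonneg _) hx1.le).trans (hDb y)
        linarith [hDb (y+1)]
      have h4 : x ^ (y+1) ≤ x ^ y := pow_le_pow_of_le_one hx0.le hx1.le (by omega)
      gcongr
    have ht : Tendsto (fun y : ℕ => x ^ y * (2 * M)) atTop (nhds (0 * (2 * M))) :=
      (tendsto_pow_atTop_nhds_zero_of_lt_one hx0.le hx1).mul_const _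
    rw [zero_mul] at ht
    have := ge_of_tendsto' ht hb
    exact abs_nonpos_iff.mp this
  have hall : ∀ y, D y = 0 := by
    intro y
    induction y with
    | zero => exact hD0
    | succ y ih =>
      have := e y
      rw [ih, hD0, mul_zero, sub_zero] at this
      exact (mul_eq_zero.mp this).resolve_left (by positivity)
  have := hall y
  simp only [hD] at this
  linarith

theorem Vr_formula (a q b : ℝ) (hb : 0 < b) (hab : b < a) (n : ℕ) :
    ∀ y : ℤ, -1 ≤ y → Vr a q b n y = (√(b / a)) ^ (-y) * (2 / Real.pi * ∫ t in (0:ℝ)..Real.pi,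
      Ux y (Real.cos t) * Kp (√(b / a)) t * (q + 2 * √(a * b) * Real.cos t) ^ n) := by
  have ha : 0 < a := hb.trans hab
  set x := √(b / a) with hxd
  have hx0 : 0 < x := Real.sqrt_pos.mpr (by positivity)
  have hx1 : x < 1 := by
    rw [hxd, Real.sqrt_lt' one_pos, one_pow, div_lt_one ha]; exact hab
  have hx : |x| < 1 := by rwa [abs_of_pos hx0]
  have hK := Kp_continuous x hx
  have h1 : a * x = √(a * b) := by
    rw [eq_comm, Real.sqrt_eq_iff_mul_self_eq (by positivity) (by positivity)]
    have : x * x = b / a := Real.mul_self_sqrt (by positivity)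
    symm
    calc a * x * (a * x) = a * a * (x * x) := by ring
      _ = a * b := by rw [this]; field_simp
  have h2 : b = √(a * b) * x := by
    have : x * x = b / a := Real.mul_self_sqrt (by positivity)
    rw [← h1, mul_assoc, this]; field_simp
  have hneg : ∀ n y, -1 ≤ y → ¬ (0 ≤ y) → Vr a q b n y = x ^ (-y) * (2 / Real.pi * ∫ t in (0:ℝ)..Real.pi,
      Ux y (Real.cos t) * Kp x t * (q + 2 * √(a * b) * Real.cos t) ^ n) := by
    intro n y hy hy0
    rw [Vr_neg _ _ _ _ _ (not_le.mp hy0)]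
    have : y = -1 := by omega
    simp [this, Ux_neg_one]
  induction n with
  | zero =>
    intro y hy
    by_cases hy0 : 0 ≤ y
    · obtain ⟨m, rfl⟩ := Int.eq_ofNat_of_zero_le hy0
      have := Iy_eq x hx0 hx1 m
      simp only [Iy] at this
      simp only [Vr, if_pos hy0, pow_zero, mul_one]
      rw [this, zpow_neg, zpow_natCast]
      have := Real.pi_pos
      field_simp
    · exact hneg _ y hy hy0
  | succ n ih =>
    intro y hy
    by_cases hy0 : 0 ≤ y
    · simp only [Vr, if_pos hy0]
      rw [ih (y-1) (by omega), ih y (by omega), ih (y+1) (by omega)]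
      have ii : ∀ m, IntervalIntegrable (fun t => Ux m (Real.cos t) * Kp x t * (q + 2 * √(a * b) * Real.cos t) ^ n) MeasureTheory.volume 0 Real.pi :=
        fun m => Continuous.intervalIntegrable (by have := Ux_continuous m; fun_prop) _ _
      have hint : ∫ t in (0:ℝ)..Real.pi, Ux y (Real.cos t) * Kp x t * (q + 2 * √(a * b) * Real.cos t) ^ (n+1)
         = q * (∫ t in (0:ℝ)..Real.pi, Ux y (Real.cos t) * Kp x t * (q + 2 * √(a * b) * Real.cos t) ^ n) + √(a * b) * ((∫ t in (0:ℝ)..Real.pi, Ux (y+1) (Real.cos t) * Kp x t * (q + 2 * √(a * b) * Real.cos t) ^ n) + (∫ t in (0:ℝ)..Real.pi, Ux (y-1) (Real.cos t) * Kp x t * (q + 2 * √(a * b) * Real.cos t) ^ n)) := by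
        rw [← intervalIntegral.integral_add (ii _) (ii _), ← intervalIntegral.integral_const_mul, ← intervalIntegral.integral_const_mul,
          ← intervalIntegral.integral_add ((ii _).const_mul _) (((ii _).add (ii _)).const_mul _)]
        congr 1
        ext t
        rw [← add_mul, ← add_mul, Ux_rec]
        ring
      rw [hint, show -(y-1) = -y + 1 by ring, show -(y+1) = -y - 1 by ring, zpow_add_one₀ hx0.ne', zpow_sub_one₀ hx0.ne']
      generalize (∫ t in (0:ℝ)..Real.pi, Ux (y+1) (Real.cos t) * Kp x t * (q + 2 * √(a * b) * Real.cos t) ^ n) = X1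
      generalize (∫ t in (0:ℝ)..Real.pi, Ux (y-1) (Real.cos t) * Kp x t * (q + 2 * √(a * b) * Real.cos t) ^ n) = X2
      generalize (∫ t in (0:ℝ)..Real.pi, Ux (y) (Real.cos t) * Kp x t * (q + 2 * √(a * b) * Real.cos t) ^ n) = X3
      have h2' : b * x⁻¹ = √(a*b) := by rw [mul_inv_eq_iff_eq_mul₀ hx0.ne']; exact h2
      have p1 : a * (x ^ (-y) * x * (2 / Real.pi * X2)) = x ^ (-y) * (2 / Real.pi * (√(a * b) * X2)) := by rw [← h1]; ring
      have p2 : b * (x ^ (-y) * x⁻¹ * (2 / Real.pi * X1)) = x ^ (-y) * (2 / Real.pi * (√(a * b) * X1)) := by rw [← h2']; ring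
      rw [p1, p2]
      ring
    · exact hneg _ y hy hy0

/-- folded version at `y = 0` -/
theorem Vr_fold (a q b : ℝ) (hb : 0 < b) (hab : b < a) (n : ℕ) :
    Vr a q b n 0 = 2 / Real.pi * ((∫ t in (0:ℝ)..(Real.pi/2), Kp (√(b / a)) t * (q + 2 * √(a * b) * Real.cos t) ^ n)
      + ∫ t in (0:ℝ)..(Real.pi/2), Kp (-√(b / a)) t * (q - 2 * √(a * b) * Real.cos t) ^ n) := by
  have ha : 0 < a := hb.trans hab
  have hx1 : √(b / a) < 1 := by
    rw [Real.sqrt_lt' one_pos, one_pow, div_lt_one ha]; exact hab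
  have hx : |√(b / a)| < 1 := by rwa [abs_of_nonneg (Real.sqrt_nonneg _)]
  have hK := Kp_continuous _ hx
  rw [Vr_formula a q b hb hab n 0 (by norm_num)]
  simp only [Ux_zero, one_mul, neg_zero, zpow_zero]
  rw [← intervalIntegral.integral_add_adjacent_intervals (b := Real.pi / 2) (Continuous.intervalIntegrable (by fun_prop) _ _) (Continuous.intervalIntegrable (by fun_prop) _ _)]
  congr 2
  have := intervalIntegral.integral_comp_sub_left (a := 0) (b := Real.pi/2) (fun t => Kp (√(b / a)) t * (q + 2 * √(a * b) * Real.cos t) ^ n) Real.pi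
  rw [show Real.pi - Real.pi / 2 = Real.pi / 2 by ring, sub_zero] at this
  rw [← this]
  congr 1
  ext t
  simp only [Kp, Real.sin_pi_sub, Real.cos_pi_sub]
  ring

theorem absorb (m : ℕ) (c z : ℝ) (hc : 0 < c) (hz : 0 ≤ z) :
    z ^ m * Real.exp (-(2 * c * z)) ≤ (m.factorial / c ^ m) * Real.exp (-(c * z)) := by
  have h := Real.pow_div_factorial_le_exp (c * z) (by positivity) m
  have hf : (0:ℝ) < m.factorial := by positivity
  have hcm : 0 < c ^ m := by positivity
  have h2 : z ^ m ≤ (m.factorial / c ^ m) * Real.exp (c * z) := by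
    rw [div_le_iff₀ hf, mul_pow] at h
    rw [div_mul_eq_mul_div, le_div_iff₀ hcm]
    nlinarith
  calc z ^ m * Real.exp (-(2 * c * z)) ≤ (m.factorial / c ^ m) * Real.exp (c * z) * Real.exp (-(2 * c * z)) := by gcongr
    _ = _ := by
      rw [mul_assoc, ← Real.exp_add]; congr 2; ring

theorem powdiff (X Y s : ℝ) (n : ℕ) (hn : 2 ≤ n) (hX : |X| ≤ Real.exp (-s)) (hY : |Y| ≤ Real.exp (-s)) (hs : 0 ≤ s) :
    |X ^ n - Y ^ n| ≤ n * |X - Y| * Real.exp (-(n * s / 2)) := by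
  have h := abs_pow_sub_pow_le X Y n
  have h2 : max |X| |Y| ^ (n - 1) ≤ Real.exp (-(n * s / 2)) := by
    calc max |X| |Y| ^ (n - 1) ≤ Real.exp (-s) ^ (n - 1) := by
          gcongr
          exact max_le hX hY
      _ = Real.exp ((n - 1 : ℕ) * (-s)) := by rw [Real.exp_nat_mul]
      _ ≤ _ := by
        apply Real.exp_le_exp.mpr
        rw [Nat.cast_sub (by omega)]
        have : (2:ℝ) ≤ n := by exact_mod_cast hn
        push_cast
        nlinarith
  calc _ ≤ _ := h
    _ ≤ |X - Y| * n * Real.exp (-(n * s / 2)) := by gcongr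
    _ = _ := by ring

theorem cos_quart (x : ℝ) : |Real.cos x - (1 - x ^ 2 / 2)| ≤ 3 * x ^ 4 := by
  by_cases h : |x| ≤ 1
  · have := Real.cos_bound h
    have h4 : |x| ^ 4 = x ^ 4 := by rw [← abs_pow]; exact abs_of_nonneg (by positivity)
    rw [h4] at this
    have : 0 ≤ x ^ 4 := by positivity
    linarith
  · push Not at h
    have h2 : 1 < x ^ 2 := by rw [← sq_abs]; nlinarith
    have h1 := Real.cos_le_one x
    have h3 := Real.neg_one_le_cos x
    rw [abs_le]; constructor <;> nlinarith

theorem exp_quad (u : ℝ) (hu : 0 ≤ u) : |Real.exp (-u) - (1 - u)| ≤ u ^ 2 := by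
  by_cases h : u ≤ 1
  · have := Real.abs_exp_sub_one_sub_id_le (x := -u) (by rw [abs_neg, abs_of_nonneg hu]; exact h)
    rw [show Real.exp (-u) - (1 - u) = Real.exp (-u) - 1 - -u by ring]
    simpa using this
  · push Not at h
    have h1 : Real.exp (-u) ≤ 1 := Real.exp_le_one_iff.mpr (by linarith)
    have h2 := Real.exp_pos (-u)
    rw [abs_le]; constructor <;> nlinarith

theorem cos_up (t : ℝ) (ht : |t| ≤ Real.pi) : Real.cos t ≤ 1 - 2 / Real.pi ^ 2 * t ^ 2 :=
  Real.cos_le_one_sub_mul_cos_sq ht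

theorem sin_sq_quart (t : ℝ) : |Real.sin t ^ 2 - t ^ 2| ≤ 24 * t ^ 4 := by
  have h := cos_quart (2 * t)
  have h2 := Real.cos_sq t
  have h3 := Real.sin_sq_add_cos_sq t
  rw [abs_le] at h ⊢
  constructor <;> nlinarith

theorem sin_sq_le (t : ℝ) : Real.sin t ^ 2 ≤ t ^ 2 := sq_le_sq.mpr Real.abs_sin_le_abs

theorem Kp_near (x1 σ t : ℝ) (hx1 : x1 < 1) (hσ : |σ| ≤ x1) :
    |Kp σ t - t ^ 2 / (1 - σ) ^ 2| ≤ (24 / (1 - x1) ^ 2 + 1 / (1 - x1) ^ 4) * t ^ 4 ∧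
      t ^ 2 / (1 - σ) ^ 2 ≤ t ^ 2 / (1 - x1) ^ 2 := by
  have h0 : 0 < 1 - x1 := by linarith
  have hσ1 := abs_le.mp hσ
  have hD := Dpos σ t (by linarith)
  set D := 1 - 2 * σ * Real.cos t + σ ^ 2 with hDdef
  have hE : (1 - x1) ^ 2 ≤ (1 - σ) ^ 2 := by apply pow_le_pow_left₀ <;> linarith
  have hD' : (1 - x1) ^ 2 ≤ D := by
    refine le_trans ?_ hD
    apply pow_le_pow_left₀ <;> linarith
  have hp : 0 < (1 - x1) ^ 2 := by positivity
  have hDp : 0 < D := by linarith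
  have hEp : 0 < (1 - σ) ^ 2 := by linarith
  have hDE : |(1 - σ) ^ 2 - D| ≤ t ^ 2 := by
    have h1 : (1 - σ) ^ 2 - D = -(2 * σ * (1 - Real.cos t)) := by rw [hDdef]; ring
    have h2 := Real.one_sub_sq_div_two_le_cos (x := t)
    have h3 := Real.cos_le_one t
    rw [h1, abs_neg, abs_mul, abs_of_nonneg (by linarith : 0 ≤ 1 - Real.cos t), abs_mul, abs_two]
    nlinarith [abs_nonneg σ]
  constructor
  · have e : Kp σ t - t ^ 2 / (1 - σ) ^ 2 = (Real.sin t ^ 2 - t ^ 2) / D + t ^ 2 * ((1 - σ) ^ 2 - D) / (D * (1 - σ) ^ 2) := by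
      have h1σ : 1 - σ ≠ 0 := by linarith
      rw [Kp, ← hDdef]
      field_simp
      ring
    rw [e]
    refine (abs_add_le _ _).trans ?_
    rw [add_mul (24 / (1 - x1) ^ 2), abs_div, abs_div, abs_mul, abs_of_pos hDp, abs_of_pos (mul_pos hDp hEp), abs_of_nonneg (sq_nonneg t)]
    apply add_le_add
    · rw [div_mul_eq_mul_div]
      gcongr
      exact sin_sq_quart t
    · rw [div_mul_eq_mul_div, one_mul]
      have : (1 - x1) ^ 4 ≤ D * (1 - σ) ^ 2 := by
        calc (1 - x1) ^ 4 = (1 - x1) ^ 2 * (1 - x1) ^ 2 := by ring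
          _ ≤ _ := by gcongr
      gcongr
      calc t ^ 2 * |(1 - σ) ^ 2 - D| ≤ t ^ 2 * t ^ 2 := by gcongr
        _ = t ^ 4 := by ring
  · gcongr

theorem XY_bound (p0 p t : ℝ) (hp0 : 0 < p0) (hp : p0 ≤ p) (hp1 : p ≤ 1) (ht0 : 0 ≤ t) (ht : t ≤ Real.pi / 2) :
    |1 - p * (1 - Real.cos t)| ≤ Real.exp (-(p0 * (2 / Real.pi ^ 2) * t ^ 2)) ∧
    |Real.exp (-(p * t ^ 2 / 2))| ≤ Real.exp (-(p0 * (2 / Real.pi ^ 2) * t ^ 2)) ∧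
    |1 - p * (1 - Real.cos t) - Real.exp (-(p * t ^ 2 / 2))| ≤ 4 * t ^ 4 := by
  have hpi := Real.pi_pos
  have hc0 : 0 ≤ Real.cos t := Real.cos_nonneg_of_mem_Icc ⟨by linarith, ht⟩
  have hc1 := Real.cos_le_one t
  have hcu := cos_up t (by rw [abs_of_nonneg ht0]; linarith)
  have hcq := cos_quart t
  have heq := exp_quad (p * t ^ 2 / 2) (by have := hp0.le.trans hp; positivity)
  refine ⟨?_, ?_, ?_⟩
  · rw [abs_of_nonneg (by nlinarith)]
    have := Real.add_one_le_exp (-(p0 * (2 / Real.pi ^ 2) * t ^ 2))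
    have : p0 * (2 / Real.pi ^ 2 * t ^ 2) ≤ p * (1 - Real.cos t) := by
      apply mul_le_mul hp (by linarith) (by positivity) (by linarith)
    nlinarith
  · rw [abs_of_pos (Real.exp_pos _)]
    apply Real.exp_le_exp.mpr
    have : 2 / Real.pi ^ 2 ≤ 1 / 2 := by
      rw [div_le_div_iff₀ (by positivity) (by norm_num)]
      nlinarith [Real.pi_gt_three]
    have h2 : p0 * (2 / Real.pi ^ 2) ≤ p * (1 / 2) := by
      apply mul_le_mul hp this (by positivity) (by linarith)
    nlinarith [sq_nonneg t]
  · have hp2 : 0 ≤ p := by linarith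
    have ht4 : 0 ≤ t ^ 4 := by positivity
    have e : 1 - p * (1 - Real.cos t) - Real.exp (-(p * t ^ 2 / 2)) = p * (Real.cos t - (1 - t ^ 2 / 2)) - (Real.exp (-(p * t ^ 2 / 2)) - (1 - p * t ^ 2 / 2)) := by ring
    rw [e]
    refine (abs_sub _ _).trans ?_
    rw [abs_mul, abs_of_nonneg hp2]
    have h1 : p * |Real.cos t - (1 - t ^ 2 / 2)| ≤ 1 * (3 * t ^ 4) := by gcongr
    have h2 : (p * t ^ 2 / 2) ^ 2 ≤ t ^ 4 := by
      have : p ^ 2 ≤ 1 := by nlinarith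
      nlinarith
    linarith

theorem lap_pw (x1 p0 : ℝ) (hx1 : x1 < 1) (hp0 : 0 < p0) : ∃ C c : ℝ, 0 < C ∧ 0 < c ∧ c ≤ p0 / 4 ∧ ∀ n : ℕ, 2 ≤ n → ∀ σ p t : ℝ, |σ| ≤ x1 → p0 ≤ p → p ≤ 1 → 0 ≤ t → t ≤ Real.pi / 2 →
    |Kp σ t * (1 - p * (1 - Real.cos t)) ^ n - t ^ 2 / (1 - σ) ^ 2 * Real.exp (-(n * p / 2) * t ^ 2)| ≤ C / n ^ 2 * Real.exp (-(c * n) * t ^ 2) := by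
  have h0 : 0 < 1 - x1 := by linarith
  set c1 := p0 * (2 / Real.pi ^ 2) with hc1
  have hc1p : 0 < c1 := by positivity
  set c := c1 / 4 with hc
  have hcp : 0 < c := by positivity
  set C1 := 24 / (1 - x1) ^ 2 + 1 / (1 - x1) ^ 4
  have hC1 : 0 < C1 := by positivity
  have hpi : 2 / Real.pi ^ 2 ≤ 1 := by
    rw [div_le_one (by positivity)]
    nlinarith [Real.pi_gt_three]
  refine ⟨C1 * (2 / c ^ 2) + 4 / (1 - x1) ^ 2 * (6 / c ^ 3), c, by positivity, hcp, by rw [hc, hc1]; nlinarith, ?_⟩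
  intro n hn σ p t hσ hp hp1 ht0 ht
  have hN : (2:ℝ) ≤ n := by exact_mod_cast hn
  obtain ⟨hK1, hK2⟩ := Kp_near x1 σ t hx1 hσ
  obtain ⟨hX, hY, hXY⟩ := XY_bound p0 p t hp0 hp hp1 ht0 ht
  rw [← hc1] at hX hY
  set X := 1 - p * (1 - Real.cos t)
  set Y := Real.exp (-(p * t ^ 2 / 2)) with hYdef
  have hYn : Real.exp (-(n * p / 2) * t ^ 2) = Y ^ n := by
    rw [hYdef, ← Real.exp_nat_mul]; congr 1; ring
  rw [hYn]
  have hd := powdiff X Y (c1 * t ^ 2) n hn hX hY (by positivity)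
  have e : Kp σ t * X ^ n - t ^ 2 / (1 - σ) ^ 2 * Y ^ n = (Kp σ t - t ^ 2 / (1 - σ) ^ 2) * X ^ n + t ^ 2 / (1 - σ) ^ 2 * (X ^ n - Y ^ n) := by ring
  rw [e]
  set z := (n:ℝ) * t ^ 2 with hz
  have hz0 : 0 ≤ z := by positivity
  have ez : Real.exp (-(n * (c1 * t ^ 2) / 2)) = Real.exp (-(2 * c * z)) := by congr 1; rw [hz, hc]; ring
  rw [ez] at hd
  have hXn : |X ^ n| ≤ Real.exp (-(2 * c * z)) := by
    rw [abs_pow]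
    calc |X| ^ n ≤ Real.exp (-(c1 * t ^ 2)) ^ n := by gcongr
      _ = Real.exp (-(4 * c * z)) := by rw [← Real.exp_nat_mul]; congr 1; rw [hz, hc]; ring
      _ ≤ _ := by apply Real.exp_le_exp.mpr; nlinarith [mul_nonneg hcp.le hz0]
  have a2 := absorb 2 c z hcp hz0
  have a3 := absorb 3 c z hcp hz0
  have eC : Real.exp (-(c * n) * t ^ 2) = Real.exp (-(c * z)) := by congr 1; rw [hz]; ring
  rw [eC]
  refine (abs_add_le _ _).trans ?_
  rw [abs_mul, abs_mul, abs_of_nonneg (by positivity : 0 ≤ t ^ 2 / (1 - σ) ^ 2)]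
  have t4 : t ^ 4 = z ^ 2 / n ^ 2 := by rw [hz]; field_simp
  have t6 : n * t ^ 6 = z ^ 3 / n ^ 2 := by rw [hz]; field_simp
  have b1 : |Kp σ t - t ^ 2 / (1 - σ) ^ 2| * |X ^ n| ≤ C1 * (2 / c ^ 2) / n ^ 2 * Real.exp (-(c * z)) := by
    calc _ ≤ C1 * t ^ 4 * Real.exp (-(2 * c * z)) := by gcongr
      _ = C1 / n ^ 2 * (z ^ 2 * Real.exp (-(2 * c * z))) := by rw [t4]; ring
      _ ≤ C1 / n ^ 2 * (((2:ℕ).factorial / c ^ 2) * Real.exp (-(c * z))) := by gcongr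
      _ = _ := by norm_num [Nat.factorial]; ring
  have b2 : t ^ 2 / (1 - σ) ^ 2 * |X ^ n - Y ^ n| ≤ 4 / (1 - x1) ^ 2 * (6 / c ^ 3) / n ^ 2 * Real.exp (-(c * z)) := by
    calc _ ≤ t ^ 2 / (1 - x1) ^ 2 * (n * (4 * t ^ 4) * Real.exp (-(2 * c * z))) := by
          gcongr
          exact hd.trans (by gcongr)
      _ = 4 / (1 - x1) ^ 2 * (n * t ^ 6) * Real.exp (-(2 * c * z)) := by ring
      _ = 4 / (1 - x1) ^ 2 / n ^ 2 * (z ^ 3 * Real.exp (-(2 * c * z))) := by rw [t6]; ring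
      _ ≤ 4 / (1 - x1) ^ 2 / n ^ 2 * (((3:ℕ).factorial / c ^ 3) * Real.exp (-(c * z))) := by gcongr
      _ = _ := by norm_num [Nat.factorial]; ring
  calc _ ≤ _ := add_le_add b1 b2
    _ = _ := by ring

theorem int_sq_gauss (b : ℝ) (hb : 0 < b) : MeasureTheory.IntegrableOn (fun t : ℝ => t ^ 2 * Real.exp (-b * t ^ 2)) (Set.Ioi 0) ∧
    ∫ t in Set.Ioi (0:ℝ), t ^ 2 * Real.exp (-b * t ^ 2) = Real.sqrt Real.pi / 4 * b ^ (-(3/2) : ℝ) := by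
  constructor
  · have := integrable_rpow_mul_exp_neg_mul_sq hb (s := 2) (by norm_num)
    simpa using this.integrableOn
  · have h := integral_rpow_mul_exp_neg_mul_rpow (p := 2) (q := 2) (b := b) (by norm_num) (by norm_num) hb
    have hg : Real.Gamma ((2 + 1) / 2) = Real.sqrt Real.pi / 2 := by
      rw [show ((2:ℝ) + 1) / 2 = 1 / 2 + 1 by norm_num, Real.Gamma_add_one (by norm_num), Real.Gamma_one_half_eq]
      ring
    rw [hg] at h
    simp only [Real.rpow_two] at h
    rw [h]
    rw [show (-(2 + 1) / 2 : ℝ) = -(3/2) by norm_num]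
    ring

theorem L1 (x1 p0 : ℝ) (hx1 : x1 < 1) (hp0 : 0 < p0) : ∃ C : ℝ, 0 < C ∧ ∀ n : ℕ, 2 ≤ n → ∀ σ p : ℝ, |σ| ≤ x1 → p0 ≤ p → p ≤ 1 →
    |(∫ t in (0:ℝ)..(Real.pi / 2), Kp σ t * (1 - p * (1 - Real.cos t)) ^ n) - Real.sqrt Real.pi / 4 * (n * p / 2) ^ (-(3/2) : ℝ) / (1 - σ) ^ 2| ≤ C * (n:ℝ) ^ (-(5/2) : ℝ) := by
  obtain ⟨C, c, hC, hc, hcp, H⟩ := lap_pw x1 p0 hx1 hp0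
  have hpi := Real.pi_pos
  set C' := C + 4 / Real.pi ^ 2 / (1 - x1) ^ 2 * (2 / (c / 2) ^ 2) with hC'
  have h01 : 0 < 1 - x1 := by linarith
  refine ⟨C' * (Real.sqrt (Real.pi / (c / 2)) / 2), by positivity, ?_⟩
  intro n hn σ p hσ hp hp1
  have hN : (2:ℝ) ≤ n := by exact_mod_cast hn
  have hσ1 := abs_le.mp hσ
  have hb : 0 < (n:ℝ) * p / 2 := by have : 0 < p := by linarith
                                    positivity
  obtain ⟨hi, hv⟩ := int_sq_gauss _ hb
  set f : ℝ → ℝ := Set.indicator (Set.Iic (Real.pi / 2)) (fun t => Kp σ t * (1 - p * (1 - Real.cos t)) ^ n) with hf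
  have hKc : Continuous (fun t => Kp σ t * (1 - p * (1 - Real.cos t)) ^ n) := by
    have := Kp_continuous σ (by linarith)
    fun_prop
  have hfi : ∫ t in Set.Ioi (0:ℝ), f t = ∫ t in (0:ℝ)..(Real.pi / 2), Kp σ t * (1 - p * (1 - Real.cos t)) ^ n := by
    rw [hf, MeasureTheory.setIntegral_indicator measurableSet_Iic, Set.Ioi_inter_Iic, intervalIntegral.integral_of_le (by positivity)]
  have hfint : MeasureTheory.IntegrableOn f (Set.Ioi 0) := by
    rw [hf, MeasureTheory.IntegrableOn, MeasureTheory.integrable_indicator_iff measurableSet_Iic, MeasureTheory.IntegrableOn, MeasureTheory.Measure.restrict_restrict measurableSet_Iic, Set.inter_comm, Set.Ioi_inter_Iic]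
    exact (hKc.integrableOn_Icc).mono_set Set.Ioc_subset_Icc_self
  have e2 : Real.sqrt Real.pi / 4 * (n * p / 2) ^ (-(3/2) : ℝ) / (1 - σ) ^ 2 = ∫ t in Set.Ioi (0:ℝ), (t ^ 2 / (1 - σ) ^ 2 * Real.exp (-(n * p / 2) * t ^ 2)) := by
    rw [← hv, ← MeasureTheory.integral_div]
    congr 1; ext t; ring
  have hgint : MeasureTheory.IntegrableOn (fun t : ℝ => t ^ 2 / (1 - σ) ^ 2 * Real.exp (-(n * p / 2) * t ^ 2)) (Set.Ioi 0) := by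
    refine (hi.div_const ((1 - σ) ^ 2)).congr (Eventually.of_forall fun t => ?_)
    simp only; ring
  rw [← hfi, e2, ← MeasureTheory.integral_sub hfint hgint]
  have hcn : 0 < c / 2 * n := by positivity
  have key := MeasureTheory.norm_integral_le_of_norm_le (μ := MeasureTheory.volume.restrict (Set.Ioi (0:ℝ)))
    (f := fun t => f t - t ^ 2 / (1 - σ) ^ 2 * Real.exp (-(n * p / 2) * t ^ 2))
    (g := fun t => C' / n ^ 2 * Real.exp (-(c / 2 * n) * t ^ 2)) ((integrable_exp_neg_mul_sq hcn).integrableOn.const_mul _)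
    ((MeasureTheory.ae_restrict_iff' measurableSet_Ioi).mpr (Eventually.of_forall fun t ht => by
      simp only [Set.mem_Ioi] at ht
      have ex : Real.exp (-(c * n) * t ^ 2) ≤ Real.exp (-(c / 2 * n) * t ^ 2) := by
        apply Real.exp_le_exp.mpr
        have : 0 ≤ c * n * t ^ 2 := by positivity
        nlinarith
      have hCC : C ≤ C' := by rw [hC']; have : 0 ≤ 4 / Real.pi ^ 2 / (1 - x1) ^ 2 * (2 / (c / 2) ^ 2) := by positivity
                              linarith
      rw [Real.norm_eq_abs]
      by_cases h : t ≤ Real.pi / 2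
      · rw [hf, Set.indicator_of_mem (by simpa using h)]
        refine (H n hn σ p t hσ hp hp1 ht.le h).trans ?_
        gcongr
      · rw [hf, Set.indicator_of_notMem (by simpa using h)]
        push Not at h
        rw [zero_sub, abs_neg, abs_of_nonneg (by positivity)]
        have a2 := absorb 2 (c / 2) (n * t ^ 2) (by positivity) (by positivity)
        have h1 : 1 ≤ 4 / Real.pi ^ 2 * t ^ 2 := by
          rw [div_mul_eq_mul_div, le_div_iff₀ (by positivity)]
          nlinarith
        have hK2 := (Kp_near x1 σ t hx1 hσ).2
        have ex2 : Real.exp (-(n * p / 2) * t ^ 2) ≤ Real.exp (-(2 * (c / 2) * (n * t ^ 2))) := by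
          apply Real.exp_le_exp.mpr
          have : c ≤ p / 2 := by linarith
          have h3 : 0 ≤ (n:ℝ) * t ^ 2 := by positivity
          nlinarith
        calc _ ≤ t ^ 2 / (1 - x1) ^ 2 * Real.exp (-(2 * (c / 2) * (n * t ^ 2))) := by gcongr
          _ ≤ t ^ 2 / (1 - x1) ^ 2 * Real.exp (-(2 * (c / 2) * (n * t ^ 2))) * (4 / Real.pi ^ 2 * t ^ 2) :=
            le_mul_of_one_le_right (by positivity) h1
          _ = 4 / Real.pi ^ 2 / (1 - x1) ^ 2 / n ^ 2 * ((n * t ^ 2) ^ 2 * Real.exp (-(2 * (c / 2) * (n * t ^ 2)))) := by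
            field_simp
          _ ≤ 4 / Real.pi ^ 2 / (1 - x1) ^ 2 / n ^ 2 * (((2:ℕ).factorial / (c / 2) ^ 2) * Real.exp (-(c / 2 * (n * t ^ 2)))) := by gcongr
          _ = 4 / Real.pi ^ 2 / (1 - x1) ^ 2 * (2 / (c / 2) ^ 2) / n ^ 2 * Real.exp (-(c / 2 * n) * t ^ 2) := by
            rw [show -(c / 2 * (n * t ^ 2)) = -(c / 2 * n) * t ^ 2 by ring]
            norm_num [Nat.factorial]; ring
          _ ≤ _ := by
            gcongr
            rw [hC']; linarith))
  rw [Real.norm_eq_abs] at key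
  refine key.trans (le_of_eq ?_)
  rw [MeasureTheory.integral_const_mul, integral_gaussian_Ioi]
  have hn0 : (0:ℝ) < n := by linarith
  rw [show Real.pi / (c / 2 * n) = Real.pi / (c / 2) / n by field_simp, Real.sqrt_div (by positivity), Real.sqrt_eq_rpow (n:ℝ),
    show (-(5/2) : ℝ) = -2 - 1/2 by norm_num, Real.rpow_sub hn0, Real.rpow_neg hn0.le, Real.rpow_two]
  field_simp


theorem ev_near (z0 : ℝ × ℝ × ℝ) (M : ℝ) (hM : 0 ≤ M) (P : ℝ × ℝ × ℝ → Prop) (h : ∀ᶠ z in nhds z0, P z) :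
    ∃ δ : ℝ, 0 < δ ∧ ∀ z t, 0 ≤ t → t < δ → dist z z0 ≤ M * t → P z := by
  obtain ⟨ε, hε, H⟩ := Metric.eventually_nhds_iff.mp h
  refine ⟨ε / (M + 1), by positivity, fun z t ht0 ht hz => H ?_⟩
  rw [lt_div_iff₀ (by positivity)] at ht
  nlinarith

theorem lip_near (z0 : ℝ × ℝ × ℝ) (M : ℝ) (hM : 0 ≤ M) (G : ℝ × ℝ × ℝ → ℝ) (hG : ContDiffAt ℝ 1 G z0) :
    ∃ δ L : ℝ, 0 < δ ∧ 0 ≤ L ∧ ∀ z t, 0 ≤ t → t < δ → dist z z0 ≤ M * t → |G z - G z0| ≤ L * t := by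
  obtain ⟨K, s, hs, hL⟩ := hG.exists_lipschitzOnWith
  obtain ⟨δ, hδ, H⟩ := ev_near z0 M hM (fun z => z ∈ s) hs
  refine ⟨δ, K * M, hδ, by positivity, fun z t ht0 ht hz => ?_⟩
  have := hL.dist_le_mul z (H z t ht0 ht hz) z0 (mem_of_mem_nhds hs)
  rw [Real.dist_eq] at this
  have h2 : (K:ℝ) * dist z z0 ≤ K * (M * t) := by gcongr
  linarith

def pz (z : ℝ × ℝ × ℝ) : ℝ := 2 * Real.sqrt (z.1 * z.2.1) / (z.2.2 + 2 * Real.sqrt (z.1 * z.2.1))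
def F1 (z : ℝ × ℝ × ℝ) : ℝ := Real.sqrt (2 / Real.pi) * pz z ^ (-(3/2) : ℝ) / (1 - Real.sqrt (z.2.1 / z.1)) ^ 2
def F2 (z : ℝ × ℝ × ℝ) : ℝ := Real.sqrt (2 / Real.pi) / (1 + Real.sqrt (z.2.1 / z.1)) ^ 2
def KF (Q : ℝ) (n : ℕ) (z : ℝ × ℝ × ℝ) : ℝ := F1 z + if Q = 0 then (-1) ^ n * F2 z else 0

theorem sqrt_lt_one' (A B : ℝ) (hB : 0 < B) (hAB : B < A) : 0 < Real.sqrt (B / A) ∧ Real.sqrt (B / A) < 1 := by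
  have hA : 0 < A := by linarith
  constructor
  · positivity
  · rw [Real.sqrt_lt' one_pos, one_pow, div_lt_one hA]; exact hAB

theorem F1_smooth (A B Q : ℝ) (hB : 0 < B) (hAB : B < A) (hQ : 0 ≤ Q) : ContDiffAt ℝ 1 F1 (A, B, Q) := by
  have hA : 0 < A := by linarith
  obtain ⟨h1, h2⟩ := sqrt_lt_one' A B hB hAB
  have hs : ContDiffAt ℝ 1 (fun z : ℝ × ℝ × ℝ => Real.sqrt (z.1 * z.2.1)) (A, B, Q) :=
    ContDiffAt.sqrt (by fun_prop) (by positivity)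
  have hs2 : ContDiffAt ℝ 1 (fun z : ℝ × ℝ × ℝ => Real.sqrt (z.2.1 / z.1)) (A, B, Q) :=
    ContDiffAt.sqrt (ContDiffAt.div (by fun_prop) (by fun_prop) hA.ne') (by positivity)
  have hs3 : 0 < Real.sqrt (A * B) := by positivity
  have hp : ContDiffAt ℝ 1 pz (A, B, Q) := by
    unfold pz
    apply ContDiffAt.div
    · exact contDiffAt_const.mul hs
    · exact ContDiffAt.add (by fun_prop) (contDiffAt_const.mul hs)
    · simp only; positivity
  unfold F1
  apply ContDiffAt.div
  · apply contDiffAt_const.mul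
    apply ContDiffAt.rpow_const_of_ne hp
    unfold pz
    simp only; positivity
  · apply ContDiffAt.pow
    exact contDiffAt_const.sub hs2
  · simp only
    have : 1 - Real.sqrt (B / A) ≠ 0 := by linarith
    positivity

theorem F2_smooth (A B Q : ℝ) (hB : 0 < B) (hAB : B < A) : ContDiffAt ℝ 1 F2 (A, B, Q) := by
  have hA : 0 < A := by linarith
  obtain ⟨h1, h2⟩ := sqrt_lt_one' A B hB hAB
  have hs2 : ContDiffAt ℝ 1 (fun z : ℝ × ℝ × ℝ => Real.sqrt (z.2.1 / z.1)) (A, B, Q) :=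
    ContDiffAt.sqrt (ContDiffAt.div (by fun_prop) (by fun_prop) hA.ne') (by positivity)
  unfold F2
  apply ContDiffAt.div contDiffAt_const
  · apply ContDiffAt.pow
    exact contDiffAt_const.add hs2
  · simp only
    positivity

theorem u_smooth (A B Q ρ : ℝ) (hB : 0 < B) (hAB : B < A) (hρ : 0 < ρ) :
    ContDiffAt ℝ 1 (fun z : ℝ × ℝ × ℝ => Real.sqrt (z.1 / ρ) - Real.sqrt (z.2.1 * ρ)) (A, B, Q) := by
  have hA : 0 < A := by linarith
  apply ContDiffAt.sub
  · exact ContDiffAt.sqrt (by fun_prop) (by positivity)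
  · exact ContDiffAt.sqrt (by fun_prop) (by positivity)

theorem KF_lip (A B Q M : ℝ) (hB : 0 < B) (hAB : B < A) (hQ : 0 ≤ Q) (hM : 0 ≤ M) :
    ∃ δ L : ℝ, 0 < δ ∧ 0 ≤ L ∧ ∀ n z t, 0 ≤ t → t < δ → dist z (A, B, Q) ≤ M * t → |KF Q n z - KF Q n (A, B, Q)| ≤ L * t := by
  obtain ⟨δ1, L1, hδ1, hL1, H1⟩ := lip_near _ M hM _ (F1_smooth A B Q hB hAB hQ)
  obtain ⟨δ2, L2, hδ2, hL2, H2⟩ := lip_near _ M hM _ (F2_smooth A B Q hB hAB)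
  refine ⟨min δ1 δ2, L1 + L2, lt_min hδ1 hδ2, by positivity, fun n z t ht0 ht hz => ?_⟩
  have h1 := H1 z t ht0 (ht.trans_le (min_le_left _ _)) hz
  have h2 := H2 z t ht0 (ht.trans_le (min_le_right _ _)) hz
  unfold KF
  split_ifs with h
  · rw [show F1 z + (-1) ^ n * F2 z - (F1 (A, B, Q) + (-1) ^ n * F2 (A, B, Q)) = (F1 z - F1 (A, B, Q)) + (-1) ^ n * (F2 z - F2 (A, B, Q)) by ring]
    refine (abs_add_le _ _).trans ?_
    rw [abs_mul, abs_pow, abs_neg, abs_one, one_pow]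
    linarith
  · have := mul_nonneg hL2 ht0
    rw [add_zero, add_zero]; linarith

theorem KF_bdd (Q : ℝ) (n : ℕ) (z : ℝ × ℝ × ℝ) : |KF Q n z| ≤ |F1 z| + |F2 z| := by
  unfold KF
  split_ifs with h
  · refine (abs_add_le _ _).trans ?_
    rw [abs_mul, abs_pow, abs_neg, abs_one, one_pow, one_mul]
  · simp

theorem Kp_bound (x1 σ t : ℝ) (hx1 : x1 < 1) (hσ : |σ| ≤ x1) : |Kp σ t| ≤ 1 / (1 - x1) ^ 2 := by
  have hD := Dpos σ t (by linarith)
  have hD' : (1 - x1) ^ 2 ≤ 1 - 2 * σ * Real.cos t + σ ^ 2 := by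
    refine le_trans ?_ hD
    apply pow_le_pow_left₀ <;> linarith
  have h0 : 0 < 1 - x1 := by linarith
  have hp : 0 < (1 - x1) ^ 2 := by positivity
  unfold Kp
  rw [abs_div, abs_of_nonneg (sq_nonneg _), abs_of_pos (by linarith : 0 < 1 - 2 * σ * Real.cos t + σ ^ 2)]
  gcongr
  exact Real.sin_sq_le_one t

theorem exp_small (η : ℝ) (hη : 0 < η) (n : ℕ) (hn : 2 ≤ n) : Real.exp (-(η * n)) ≤ 6 / (η / 2) ^ 3 * (n:ℝ) ^ (-(5/2) : ℝ) := by
  have hN : (2:ℝ) ≤ n := by exact_mod_cast hn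
  have hn0 : (0:ℝ) < n := by linarith
  have h := absorb 3 (η / 2) n (by positivity) (by positivity)
  have h2 : Real.exp (-(η / 2 * n)) ≤ 1 := Real.exp_le_one_iff.mpr (by have : 0 ≤ η / 2 * n := by positivity
                                                                       linarith)
  have h3 : (n:ℝ) ^ 3 * Real.exp (-(η * n)) ≤ 6 / (η / 2) ^ 3 := by
    rw [show η * n = 2 * (η / 2) * n by ring]
    refine h.trans ?_
    norm_num [Nat.factorial]
    exact mul_le_of_le_one_right (by positivity) (by simpa using h2)
  have h4 : (n:ℝ) ^ 3 * (n:ℝ) ^ (-(5/2) : ℝ) ≥ 1 := by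
    rw [← Real.rpow_natCast, ← Real.rpow_add hn0]
    apply Real.one_le_rpow (by linarith) (by norm_num)
  calc Real.exp (-(η * n)) ≤ Real.exp (-(η * n)) * ((n:ℝ) ^ 3 * (n:ℝ) ^ (-(5/2) : ℝ)) := le_mul_of_one_le_right (Real.exp_pos _).le h4
    _ = ((n:ℝ) ^ 3 * Real.exp (-(η * n))) * (n:ℝ) ^ (-(5/2) : ℝ) := by ring
    _ ≤ _ := by gcongr

theorem L1' (x1 p0 : ℝ) (hx1 : x1 < 1) (hp0 : 0 < p0) : ∃ C : ℝ, 0 < C ∧ ∀ n : ℕ, 2 ≤ n → ∀ σ p : ℝ, |σ| ≤ x1 → p0 ≤ p → p ≤ 1 →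
    |2 / Real.pi * (∫ t in (0:ℝ)..(Real.pi / 2), Kp σ t * (1 - p * (1 - Real.cos t)) ^ n) - (n:ℝ) ^ (-(3/2) : ℝ) * (Real.sqrt (2 / Real.pi) * p ^ (-(3/2) : ℝ) / (1 - σ) ^ 2)| ≤ C * (n:ℝ) ^ (-(5/2) : ℝ) := by
  obtain ⟨C, hC, H⟩ := L1 x1 p0 hx1 hp0
  have hpi := Real.pi_pos
  refine ⟨2 / Real.pi * C, by positivity, fun n hn σ p hσ hp hp1 => ?_⟩
  have h := H n hn σ p hσ hp hp1
  have hpp : 0 < p := by linarith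
  have e : (n:ℝ) ^ (-(3/2) : ℝ) * (Real.sqrt (2 / Real.pi) * p ^ (-(3/2) : ℝ) / (1 - σ) ^ 2) = 2 / Real.pi * (Real.sqrt Real.pi / 4 * (n * p / 2) ^ (-(3/2) : ℝ) / (1 - σ) ^ 2) := by
    rw [Real.div_rpow (by positivity) (by norm_num), Real.mul_rpow (by positivity) hpp.le]
    have h2 : (2:ℝ) ^ (-(3/2) : ℝ) = 1 / (2 * Real.sqrt 2) := by
      rw [show (-(3/2) : ℝ) = -(1 + 1/2) by norm_num, Real.rpow_neg (by norm_num), Real.rpow_add (by norm_num), Real.rpow_one, ← Real.sqrt_eq_rpow, one_div]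
    rw [h2, Real.sqrt_div (by norm_num)]
    have s1 := Real.mul_self_sqrt hpi.le
    have s3 : 0 < Real.sqrt Real.pi := by positivity
    have : Real.sqrt 2 / Real.sqrt Real.pi = 2 / Real.pi * (Real.sqrt Real.pi / 4 / (1 / (2 * Real.sqrt 2))) := by
      nth_rewrite 2 [← s1]
      field_simp
      norm_num
    rw [this]
    ring
  rw [e, ← mul_sub, abs_mul, abs_of_pos (by positivity), mul_assoc]
  gcongr

set_option maxHeartbeats 1000000 in
theorem near_R (A B Q M : ℝ) (hB : 0 < B) (hAB : B < A) (hQ : 0 ≤ Q) (hM : 0 ≤ M) :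
    ∃ C δ : ℝ, 0 < C ∧ 0 < δ ∧ ∀ n : ℕ, 2 ≤ n → ∀ a b q t : ℝ, 0 ≤ t → t < δ → dist (a, b, q) (A, B, Q) ≤ M * t → 0 ≤ q → (Q = 0 → q = 0) →
      0 < a ∧ 0 < b ∧
      |Vr a q b n 0 / (q + 2 * Real.sqrt (a * b)) ^ n - (n:ℝ) ^ (-(3/2) : ℝ) * KF Q n (a, b, q)| ≤ C * (n:ℝ) ^ (-(5/2) : ℝ) := by
  have hA : 0 < A := by linarith
  have hpi := Real.pi_pos
  obtain ⟨hr0, hr1⟩ := sqrt_lt_one' A B hB hAB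
  set x1 := (1 + Real.sqrt (B / A)) / 2 with hx1d
  have hx1 : x1 < 1 := by rw [hx1d]; linarith
  have hx1' : Real.sqrt (B / A) < x1 := by rw [hx1d]; linarith
  set s0 := Real.sqrt (A * B) with hs0d
  have hs0 : 0 < s0 := by positivity
  -- the good neighbourhood
  have hcs : ContinuousAt (fun z : ℝ × ℝ × ℝ => Real.sqrt (z.1 * z.2.1)) (A, B, Q) := by fun_prop
  have hcd : ContinuousAt (fun z : ℝ × ℝ × ℝ => Real.sqrt (z.2.1 / z.1)) (A, B, Q) := by
    apply ContinuousAt.sqrt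
    exact ContinuousAt.div (by fun_prop) (by fun_prop) hA.ne'
  have hev : ∀ᶠ z : ℝ × ℝ × ℝ in nhds (A, B, Q), 0 < z.2.1 ∧ z.2.1 < z.1 ∧ Real.sqrt (z.2.1 / z.1) < x1 ∧ s0 / 2 < Real.sqrt (z.1 * z.2.1) ∧
      Real.sqrt (z.1 * z.2.1) < 2 * s0 ∧ z.2.2 < Q + 1 ∧ (0 < Q → Q / 2 < z.2.2) := by
    have e1 : ∀ᶠ z : ℝ × ℝ × ℝ in nhds (A, B, Q), 0 < z.2.1 := (by fun_prop : ContinuousAt (fun z : ℝ × ℝ × ℝ => z.2.1) (A, B, Q)).eventually_const_lt hB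
    have e2 : ∀ᶠ z : ℝ × ℝ × ℝ in nhds (A, B, Q), z.2.1 < z.1 := ContinuousAt.eventually_lt (f := fun z : ℝ × ℝ × ℝ => z.2.1) (g := fun z : ℝ × ℝ × ℝ => z.1) (by fun_prop) (by fun_prop) hAB
    have e3 := hcd.eventually_lt_const hx1'
    have e4 := hcs.eventually_const_lt (show s0 / 2 < s0 by linarith)
    have e5 := hcs.eventually_lt_const (show s0 < 2 * s0 by linarith)
    have e6 : ∀ᶠ z : ℝ × ℝ × ℝ in nhds (A, B, Q), z.2.2 < Q + 1 := (by fun_prop : ContinuousAt (fun z : ℝ × ℝ × ℝ => z.2.2) (A, B, Q)).eventually_lt_const (show Q < Q + 1 by linarith)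
    have e7 : ∀ᶠ z : ℝ × ℝ × ℝ in nhds (A, B, Q), (0 < Q → Q / 2 < z.2.2) := by
      by_cases h : 0 < Q
      · filter_upwards [(by fun_prop : ContinuousAt (fun z : ℝ × ℝ × ℝ => z.2.2) (A, B, Q)).eventually_const_lt (show Q / 2 < Q by linarith)] with z hz _ using hz
      · exact Eventually.of_forall fun z hz => absurd hz h
    filter_upwards [e1, e2, e3, e4, e5, e6, e7] with z h1 h2 h3 h4 h5 h6 h7 using ⟨h1, h2, h3, h4, h5, h6, h7⟩
  obtain ⟨δ, hδ, H⟩ := ev_near _ M hM _ hev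
  set Λ := Q + 1 + 4 * s0 with hΛ
  have hΛp : 0 < Λ := by positivity
  set p0 := s0 / Λ with hp0d
  have hp0 : 0 < p0 := by positivity
  have hp01 : p0 ≤ 1 := by rw [hp0d, div_le_one hΛp]; linarith
  obtain ⟨C1, hC1, HL⟩ := L1' x1 p0 hx1 hp0
  set η := min (Q / 2) s0 / Λ with hη
  have h1x : 0 < 1 - x1 := by linarith
  set C2 := 1 / (1 - x1) ^ 2 * (6 / (η / 2) ^ 3) with hC2
  refine ⟨2 * C1 + |C2|, δ, by positivity, hδ, ?_⟩
  intro n hn a b q t ht0 ht hz hq hq0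
  obtain ⟨h1, h2, h3, h4, h5, h6, h7⟩ := H (a, b, q) t ht0 ht hz
  simp only at h1 h2 h3 h4 h5 h6 h7
  have ha : 0 < a := by linarith
  refine ⟨ha, h1, ?_⟩
  set x := Real.sqrt (b / a) with hx
  have hx0 : 0 ≤ x := Real.sqrt_nonneg _
  set s := Real.sqrt (a * b) with hs
  set lam := q + 2 * s with hlam
  have hlp : 0 < lam := by rw [hlam]; linarith
  have hlΛ : lam ≤ Λ := by rw [hlam, hΛ]; linarith
  set p := 2 * s / lam with hp
  have hp1 : p ≤ 1 := by rw [hp, div_le_one hlp]; linarith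
  have hpp : p0 ≤ p := by
    rw [hp0d, hp]
    apply div_le_div₀ <;> linarith
  have hpl : lam * p = 2 * s := by rw [hp]; field_simp
  have hVr := Vr_fold a q b h1 h2 n
  rw [← hx, ← hs] at hVr
  have i1 : ∀ t, Kp x t * (q + 2 * s * Real.cos t) ^ n = lam ^ n * (Kp x t * (1 - p * (1 - Real.cos t)) ^ n) := by
    intro t
    have : q + 2 * s * Real.cos t = lam * (1 - p * (1 - Real.cos t)) := by
      rw [show lam * (1 - p * (1 - Real.cos t)) = lam - (lam * p) * (1 - Real.cos t) by ring, hpl, hlam]; ring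
    rw [this, mul_pow]; ring
  have hax : |x| ≤ x1 := by rw [abs_of_nonneg hx0]; exact h3.le
  have hax' : |-x| ≤ x1 := by rw [abs_neg]; exact hax
  have m1 := HL n hn x p hax hpp hp1
  simp only [i1, intervalIntegral.integral_const_mul] at hVr
  set I1 := ∫ t in (0:ℝ)..(Real.pi / 2), Kp x t * (1 - p * (1 - Real.cos t)) ^ n with hI1
  set I2 := ∫ t in (0:ℝ)..(Real.pi / 2), Kp (-x) t * (q - 2 * s * Real.cos t) ^ n with hI2
  have hln : 0 < lam ^ n := by positivity
  have hR : Vr a q b n 0 / lam ^ n = 2 / Real.pi * I1 + 2 / Real.pi * (I2 / lam ^ n) := by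
    rw [hVr]; field_simp
  have hF1 : F1 (a, b, q) = Real.sqrt (2 / Real.pi) * p ^ (-(3/2) : ℝ) / (1 - x) ^ 2 := rfl
  rw [hR]
  have hn5 : 0 < (n:ℝ) ^ (-(5/2) : ℝ) := by
    have : (0:ℝ) < n := by exact_mod_cast (by omega : 0 < n)
    positivity
  unfold KF
  rw [hF1]
  split_ifs with hQ0
  · have hq' := hq0 hQ0
    have m2 := HL n hn (-x) 1 hax' hp01 le_rfl
    have i2 : ∀ t, Kp (-x) t * (q - 2 * s * Real.cos t) ^ n = lam ^ n * (-1) ^ n * (Kp (-x) t * (1 - 1 * (1 - Real.cos t)) ^ n) := by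
      intro t
      rw [hlam, hq', ← mul_pow, show (0 - 2 * s * Real.cos t) = ((0 + 2 * s) * (-1)) * (1 - 1 * (1 - Real.cos t)) by ring, mul_pow]
      ring
    simp only [i2, intervalIntegral.integral_const_mul] at hI2
    set I3 := ∫ t in (0:ℝ)..(Real.pi / 2), Kp (-x) t * (1 - 1 * (1 - Real.cos t)) ^ n with hI3
    have e2 : I2 / lam ^ n = (-1) ^ n * I3 := by rw [hI2]; field_simp
    have hF2 : F2 (a, b, q) = Real.sqrt (2 / Real.pi) * 1 ^ (-(3/2) : ℝ) / (1 - -x) ^ 2 := by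
      rw [Real.one_rpow, mul_one, sub_neg_eq_add]; rfl
    rw [e2, hF2]
    set Y1 := Real.sqrt (2 / Real.pi) * p ^ (-(3/2) : ℝ) / (1 - x) ^ 2
    set Y2 := Real.sqrt (2 / Real.pi) * 1 ^ (-(3/2) : ℝ) / (1 - -x) ^ 2
    rw [show 2 / Real.pi * I1 + 2 / Real.pi * ((-1) ^ n * I3) - (n:ℝ) ^ (-(3/2) : ℝ) * (Y1 + (-1) ^ n * Y2) = (2 / Real.pi * I1 - (n:ℝ) ^ (-(3/2) : ℝ) * Y1) + (-1) ^ n * (2 / Real.pi * I3 - (n:ℝ) ^ (-(3/2) : ℝ) * Y2) by ring]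
    refine (abs_add_le _ _).trans ?_
    rw [abs_mul, abs_pow, abs_neg, abs_one, one_pow, one_mul]
    have := mul_nonneg (abs_nonneg C2) hn5.le
    linarith
  · have hQp : 0 < Q := lt_of_le_of_ne hQ (Ne.symm hQ0)
    have hq2 := h7 hQp
    have hηp : 0 < η := by rw [hη]; have : 0 < min (Q / 2) s0 := lt_min (by positivity) hs0
                           positivity
    have hmin : η * lam ≤ min (Q / 2) s0 := by
      rw [hη, div_mul_eq_mul_div, div_le_iff₀ hΛp]
      have : 0 < min (Q / 2) s0 := lt_min (by positivity) hs0
      gcongr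
    have hm1 := min_le_left (Q / 2) s0
    have hm2 := min_le_right (Q / 2) s0
    have b2 : |I2| ≤ 1 / (1 - x1) ^ 2 * (lam ^ n * Real.exp (-(η * n))) * |Real.pi / 2 - 0| := by
      rw [← Real.norm_eq_abs, hI2]
      apply intervalIntegral.norm_integral_le_of_norm_le_const
      intro t ht
      rw [Set.uIoc_of_le (by positivity)] at ht
      have hc0 : 0 ≤ Real.cos t := Real.cos_nonneg_of_mem_Icc ⟨by linarith [ht.1], ht.2⟩
      have hc1 := Real.cos_le_one t
      rw [Real.norm_eq_abs, abs_mul, abs_pow]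
      have hb : |q - 2 * s * Real.cos t| ≤ lam * Real.exp (-η) := by
        have h8 : 1 - η ≤ Real.exp (-η) := by have := Real.add_one_le_exp (-η); linarith
        have h9 : |q - 2 * s * Real.cos t| ≤ lam * (1 - η) := by
          have : 0 ≤ s * Real.cos t := by positivity
          have hsc : s * Real.cos t ≤ s := mul_le_of_le_one_right (by linarith) hc1
          have hll : lam * (1 - η) = q + 2 * s - η * lam := by rw [mul_sub, mul_one, mul_comm lam η, hlam]
          rw [abs_le, hll]
          constructor <;> linarith
        exact h9.trans (by gcongr)
      have hb2 : |q - 2 * s * Real.cos t| ^ n ≤ lam ^ n * Real.exp (-(η * n)) := by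
        calc _ ≤ (lam * Real.exp (-η)) ^ n := by gcongr
          _ = _ := by rw [mul_pow, ← Real.exp_nat_mul]; congr 2; ring
      have := Kp_bound x1 (-x) t hx1 hax'
      gcongr
    have b3 : |2 / Real.pi * (I2 / lam ^ n)| ≤ C2 * (n:ℝ) ^ (-(5/2) : ℝ) := by
      rw [abs_mul, abs_div I2, abs_of_pos hln, abs_of_pos (by positivity : 0 < 2 / Real.pi)]
      rw [sub_zero, abs_of_pos (by positivity : 0 < Real.pi / 2)] at b2
      calc _ ≤ 2 / Real.pi * (1 / (1 - x1) ^ 2 * (lam ^ n * Real.exp (-(η * n))) * (Real.pi / 2) / lam ^ n) := by gcongr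
        _ = 1 / (1 - x1) ^ 2 * Real.exp (-(η * n)) := by field_simp
        _ ≤ 1 / (1 - x1) ^ 2 * (6 / (η / 2) ^ 3 * (n:ℝ) ^ (-(5/2) : ℝ)) := by
          gcongr
          exact exp_small η hηp n hn
        _ = _ := by rw [hC2]; ring
    rw [add_zero, show ∀ u v w : ℝ, u + v - w = (u - w) + v by intros; ring]
    refine (abs_add_le _ _).trans ?_
    have := mul_le_mul_of_nonneg_right (le_abs_self C2) hn5.le
    have := mul_pos hC1 hn5
    linarith


theorem main_pw (A B Q M c ρ S : ℝ) (hB : 0 < B) (hAB : B < A) (hQ : 0 ≤ Q) (hM : 0 ≤ M) (hc : 0 < c)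
    (hρ : ρ = Real.sqrt (A / B)) (hS : S = A / ρ + Q + B * ρ) :
    ∃ C c' : ℝ, 0 < C ∧ 0 < c' ∧ ∀ n : ℕ, 2 ≤ n → ∀ a b q t g : ℝ, 0 ≤ a → 0 ≤ b → 0 ≤ q → 0 ≤ t →
      dist (a, b, q) (A, B, Q) ≤ M * t → (Q = 0 → q = 0) → a / ρ + q + b * ρ ≤ S * Real.exp (-(c * t)) →
      |(a / ρ + q + b * ρ) / S - Real.exp (-g)| ≤ M * t ^ 2 → c * t ≤ g →
      |Vr a q b n 0 / S ^ n - (n:ℝ) ^ (-(3/2) : ℝ) * KF Q n (A, B, Q) * Real.exp (-(n * g))| ≤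
        C * (n:ℝ) ^ (-(5/2) : ℝ) * Real.exp (-(c' * n * t)) := by
  have hA : 0 < A := by linarith
  have hρ1 : 1 ≤ ρ := by
    rw [hρ]; apply Real.one_le_sqrt.mpr; rw [le_div_iff₀ hB]; linarith
  have hρ0 : 0 < ρ := by linarith
  have hρsq : ρ * ρ = A / B := by rw [hρ]; exact Real.mul_self_sqrt (by positivity)
  have hAρ : A / ρ = B * ρ := by
    rw [div_eq_iff hρ0.ne', mul_assoc, hρsq]; field_simp
  have hSp : 0 < S := by rw [hS]; positivity
  obtain ⟨C1, δ1, hC1, hδ1, H1⟩ := near_R A B Q M hB hAB hQ hM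
  obtain ⟨δ2, L2, hδ2, hL2, H2⟩ := KF_lip A B Q M hB hAB hQ hM
  obtain ⟨δ3, L3, hδ3, hL3, H3⟩ := lip_near _ M hM _ (u_smooth A B Q ρ hB hAB hρ0)
  set Kb := |F1 (A, B, Q)| + |F2 (A, B, Q)| with hKb
  have hKb0 : 0 ≤ Kb := by positivity
  set δ := min δ1 (min δ2 δ3) with hδ
  have hδp : 0 < δ := lt_min hδ1 (lt_min hδ2 hδ3)
  set c4 := c / 4 with hc4
  have hc4p : 0 < c4 := by positivity
  set L4 := L3 ^ 2 / S + M with hL4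
  have hL4p : 0 ≤ L4 := by positivity
  set Cn := C1 + L2 * (1 / c4) + Kb * L4 * (2 / c4 ^ 2) with hCn
  have hCnp : 0 ≤ Cn := by positivity
  set Cf := (1 + Kb) * (6 / (c * δ / 2 / 2) ^ 3) with hCf
  have hCfp : 0 < Cf := by positivity
  refine ⟨Cn + Cf, c4, by positivity, hc4p, ?_⟩
  intro n hn a b q t g ha hb hq ht hz hq0 hu hug hg
  have hN : (2:ℝ) ≤ n := by exact_mod_cast hn
  have hn0 : (0:ℝ) < n := by linarith
  set n5 := (n:ℝ) ^ (-(5/2) : ℝ) with hn5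
  set n3 := (n:ℝ) ^ (-(3/2) : ℝ) with hn3
  have hn5p : 0 < n5 := by positivity
  have hn3p : 0 < n3 := by positivity
  have hn35 : n3 = n5 * n := by
    rw [hn3, hn5, ← Real.rpow_add_one hn0.ne']; norm_num
  have hK := KF_bdd Q n (A, B, Q)
  rw [← hKb] at hK
  set K := KF Q n (A, B, Q) with hKd
  set u := a / ρ + q + b * ρ with hud
  have hY : Real.exp (-(n * g)) = Real.exp (-g) ^ n := by
    rw [← Real.exp_nat_mul]; congr 1; ring
  have hgg : Real.exp (-g) ≤ Real.exp (-(c * t)) := Real.exp_le_exp.mpr (by linarith)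
  rw [hY]
  by_cases hnear : t < δ
  · have t1 : t < δ1 := hnear.trans_le (min_le_left _ _)
    have t2 : t < δ2 := hnear.trans_le ((min_le_right _ _).trans (min_le_left _ _))
    have t3 : t < δ3 := hnear.trans_le ((min_le_right _ _).trans (min_le_right _ _))
    obtain ⟨hap, hbp, r1⟩ := H1 n hn a b q t ht t1 hz hq hq0
    have r2 := H2 n (a, b, q) t ht t2 hz
    have r3 := H3 (a, b, q) t ht t3 hz
    simp only [hAρ, sub_self, sub_zero] at r3
    set lam := q + 2 * Real.sqrt (a * b) with hlam
    have hlp : 0 < lam := by positivity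
    have hul : u - lam = (Real.sqrt (a / ρ) - Real.sqrt (b * ρ)) ^ 2 := by
      have e1 := Real.sq_sqrt (show 0 ≤ a / ρ by positivity)
      have e2 := Real.sq_sqrt (show 0 ≤ b * ρ by positivity)
      have e3 : Real.sqrt (a / ρ) * Real.sqrt (b * ρ) = Real.sqrt (a * b) := by
        rw [← Real.sqrt_mul (by positivity)]; congr 1; field_simp
      rw [sub_sq, e1, e2, mul_assoc, e3, hud, hlam]; ring
    have hul2 : u - lam ≤ L3 ^ 2 * t ^ 2 := by
      rw [hul, ← sq_abs, ← mul_pow]; gcongr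
    have hul0 : lam ≤ u := by have := sq_nonneg (Real.sqrt (a / ρ) - Real.sqrt (b * ρ)); linarith
    set X := lam / S with hX
    have hX0 : 0 ≤ X := by positivity
    have hXb : |X| ≤ Real.exp (-(c * t)) := by
      rw [abs_of_nonneg hX0, hX, div_le_iff₀ hSp]; linarith
    have hYb : |Real.exp (-g)| ≤ Real.exp (-(c * t)) := by rw [abs_of_pos (Real.exp_pos _)]; exact hgg
    have hXY : |X - Real.exp (-g)| ≤ L4 * t ^ 2 := by
      have e : X - Real.exp (-g) = (u / S - Real.exp (-g)) - (u - lam) / S := by rw [hX]; ring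
      rw [e]
      refine (abs_sub _ _).trans ?_
      rw [abs_of_nonneg (div_nonneg (by linarith : 0 ≤ u - lam) hSp.le), hL4, add_mul, add_comm, div_mul_eq_mul_div]
      gcongr
    have hd := powdiff X (Real.exp (-g)) (c * t) n hn hXb hYb (by positivity)
    set z := (n:ℝ) * t with hzd
    have hz0 : 0 ≤ z := by positivity
    have eE : Real.exp (-(n * (c * t) / 2)) = Real.exp (-(2 * c4 * z)) := by congr 1; rw [hzd, hc4]; ring
    rw [eE] at hd
    have hXn : X ^ n ≤ Real.exp (-(2 * c4 * z)) := by
      calc X ^ n ≤ Real.exp (-(c * t)) ^ n := by gcongr; exact (le_abs_self _).trans hXb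
        _ = Real.exp (-(4 * c4 * z)) := by rw [← Real.exp_nat_mul]; congr 1; rw [hzd, hc4]; ring
        _ ≤ _ := by apply Real.exp_le_exp.mpr; have := mul_nonneg hc4p.le hz0; linarith
    have hXn0 : 0 ≤ X ^ n := by positivity
    set E := Real.exp (-(2 * c4 * z)) with hE
    have a0 := absorb 0 c4 z hc4p hz0
    have a1 := absorb 1 c4 z hc4p hz0
    have a2 := absorb 2 c4 z hc4p hz0
    rw [← hE] at a0 a1 a2
    rw [show -(c4 * n * t) = -(c4 * z) by rw [hzd]; ring]
    set E' := Real.exp (-(c4 * z)) with hE'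
    simp only [pow_zero, one_mul, Nat.factorial, Nat.cast_one, div_one, pow_one] at a0 a1
    norm_num [Nat.factorial] at a2
    set R := Vr a q b n 0 / lam ^ n with hR
    have eV : Vr a q b n 0 / S ^ n = X ^ n * R := by
      rw [hX, hR, div_pow]; field_simp
    set Kz := KF Q n (a, b, q)
    rw [eV, show X ^ n * R - n3 * K * Real.exp (-g) ^ n = X ^ n * (R - n3 * Kz) + n3 * (X ^ n * (Kz - K)) + n3 * (K * (X ^ n - Real.exp (-g) ^ n)) by ring]
    refine (abs_add_three _ _ _).trans ?_
    rw [abs_mul, abs_mul, abs_mul, abs_mul, abs_mul, abs_of_nonneg hXn0, abs_of_pos hn3p]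
    have k1 : X ^ n * |R - n3 * Kz| ≤ n5 * (C1 * E') := by
      calc _ ≤ E * (C1 * n5) := by gcongr
        _ ≤ E' * (C1 * n5) := by gcongr
        _ = _ := by ring
    have k2 : n3 * (X ^ n * |Kz - K|) ≤ n5 * (L2 * (1 / c4) * E') := by
      calc _ ≤ n3 * (E * (L2 * t)) := by gcongr
        _ = n5 * (L2 * (z * E)) := by rw [hn35, hzd]; ring
        _ ≤ n5 * (L2 * (1 / c4 * E')) := by
          refine mul_le_mul_of_nonneg_left (mul_le_mul_of_nonneg_left ?_ hL2) hn5p.le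
          simpa using a1
        _ = _ := by ring
    have k3 : n3 * (|K| * |X ^ n - Real.exp (-g) ^ n|) ≤ n5 * (Kb * L4 * (2 / c4 ^ 2) * E') := by
      calc _ ≤ n3 * (Kb * (n * (L4 * t ^ 2) * E)) := by
            gcongr
            exact hd.trans (by gcongr)
        _ = n5 * (Kb * L4 * (z ^ 2 * E)) := by rw [hn35, hzd]; ring
        _ ≤ n5 * (Kb * L4 * (2 / c4 ^ 2 * E')) := by
          refine mul_le_mul_of_nonneg_left (mul_le_mul_of_nonneg_left ?_ (mul_nonneg hKb0 hL4p)) hn5p.le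
          simpa using a2
        _ = _ := by ring
    calc _ ≤ n5 * (C1 * E') + n5 * (L2 * (1 / c4) * E') + n5 * (Kb * L4 * (2 / c4 ^ 2) * E') := add_le_add (add_le_add k1 k2) k3
      _ = Cn * n5 * E' := by rw [hCn]; ring
      _ ≤ (Cn + Cf) * n5 * E' := by gcongr; linarith
  · push Not at hnear
    have hcr := Vr_crude a q b ρ ha hq hb hρ1 n 0
    rw [zpow_zero, mul_one, ← hud] at hcr
    have hu0 : 0 ≤ u := by positivity
    have hus : u / S ≤ Real.exp (-(c * t)) := by rw [div_le_iff₀ hSp]; linarith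
    have hV : |Vr a q b n 0 / S ^ n| ≤ Real.exp (-(c * t)) ^ n := by
      rw [abs_div, abs_of_pos (by positivity : 0 < S ^ n)]
      calc _ ≤ u ^ n / S ^ n := by gcongr
        _ = (u / S) ^ n := by rw [div_pow]
        _ ≤ _ := by gcongr
    have hn31 : n3 ≤ 1 := Real.rpow_le_one_of_one_le_of_nonpos (by linarith) (by norm_num)
    have hW : |n3 * K * Real.exp (-g) ^ n| ≤ Kb * Real.exp (-(c * t)) ^ n := by
      rw [abs_mul, abs_mul, abs_of_pos hn3p, abs_pow, abs_of_pos (Real.exp_pos _)]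
      calc _ ≤ 1 * Kb * Real.exp (-(c * t)) ^ n := by gcongr
        _ = _ := by ring
    have hEs := exp_small (c * δ / 2) (by positivity) n hn
    have hEE : Real.exp (-(c * t)) ^ n ≤ Real.exp (-(c * δ / 2 * n)) * Real.exp (-(c4 * n * t)) := by
      rw [← Real.exp_nat_mul, ← Real.exp_add]
      apply Real.exp_le_exp.mpr
      have h1 : c * (n * δ) ≤ c * (n * t) := by gcongr
      have h2 : 0 ≤ c * (n * t) := by positivity
      rw [hc4]
      linarith
    refine (abs_sub _ _).trans ?_
    calc _ ≤ (1 + Kb) * Real.exp (-(c * t)) ^ n := by linarith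
      _ ≤ (1 + Kb) * ((6 / (c * δ / 2 / 2) ^ 3 * n5) * Real.exp (-(c4 * n * t))) := by
        gcongr
        exact hEE.trans (by gcongr)
      _ = Cf * n5 * Real.exp (-(c4 * n * t)) := by rw [hCf]; ring
      _ ≤ (Cn + Cf) * n5 * Real.exp (-(c4 * n * t)) := by gcongr; linarith


theorem prod_one_sub_lower {ι : Type*} (s : Finset ι) (e : ι → ℝ) (h0 : ∀ k ∈ s, 0 ≤ e k) (h1 : ∀ k ∈ s, e k ≤ 1) :
    1 - ∑ k ∈ s, e k ≤ ∏ k ∈ s, (1 - e k) ∧ ∏ k ∈ s, (1 - e k) ≤ 1 ∧ 0 ≤ ∏ k ∈ s, (1 - e k) := by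
  induction s using Finset.induction_on with
  | empty => simp
  | insert a s ha ih =>
    obtain ⟨i1, i2, i3⟩ := ih (fun k hk => h0 k (by simp [hk])) (fun k hk => h1 k (by simp [hk]))
    have a0 := h0 a (by simp)
    have a1 := h1 a (by simp)
    rw [Finset.sum_insert ha, Finset.prod_insert ha]
    refine ⟨?_, ?_, ?_⟩ <;> nlinarith

theorem prod_one_sub_upper {ι : Type*} (s : Finset ι) (e : ι → ℝ) (h0 : ∀ k ∈ s, 0 ≤ e k) (h1 : ∀ k ∈ s, e k ≤ 1) :
    |∏ k ∈ s, (1 - e k) - (1 - ∑ k ∈ s, e k)| ≤ (∑ k ∈ s, e k) ^ 2 := by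
  obtain ⟨i1, i2, i3⟩ := prod_one_sub_lower s e h0 h1
  rw [abs_of_nonneg (by linarith)]
  have h2 : ∏ k ∈ s, (1 - e k) ≤ Real.exp (-∑ k ∈ s, e k) := by
    rw [← Finset.sum_neg_distrib, Real.exp_sum]
    refine Finset.prod_le_prod (fun k hk => by linarith [h1 k hk]) (fun k hk => ?_)
    have := Real.add_one_le_exp (-(e k)); linarith
  have h3 := (abs_le.mp (exp_quad (∑ k ∈ s, e k) (Finset.sum_nonneg h0))).2
  linarith

theorem prod_one_sub_avg (d : ℕ) (e : Fin d → ℝ) (h0 : ∀ k, 0 ≤ e k) (h1 : ∀ k, e k ≤ 1) :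
    ∏ k, (1 - e k) ≤ 1 - (1 / ((d:ℝ) + 1)) * ∑ k, e k := by
  have hk : ∀ k, ∏ k, (1 - e k) ≤ 1 - e k := by
    intro k
    rw [← Finset.mul_prod_erase Finset.univ _ (Finset.mem_univ k)]
    have := (prod_one_sub_lower (Finset.univ.erase k) e (fun k _ => h0 k) (fun k _ => h1 k)).2.1
    have := h1 k
    nlinarith
  have h2 := (prod_one_sub_lower Finset.univ e (fun k _ => h0 k) (fun k _ => h1 k)).2.1
  have h3 := Finset.sum_le_sum (s := Finset.univ) (fun k _ => hk k)
  simp only [Finset.sum_const, Finset.card_univ, Fintype.card_fin, nsmul_eq_mul, Finset.sum_sub_distrib] at h3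
  have hd : (0:ℝ) < d + 1 := by positivity
  rw [one_div, inv_mul_eq_div, le_sub_iff_add_le, ← le_sub_iff_add_le', div_le_iff₀ hd]
  nlinarith

def nz {d : ℕ} (i : Fin (d + 1) → ℤ) (k : Fin d) : ℝ := if i k.castSucc = 0 then 0 else 1

def tt {d : ℕ} (θ : Fin d → ℝ) : ℝ := ∑ k, θ k ^ 2

theorem tt_nonneg {d : ℕ} (θ : Fin d → ℝ) : 0 ≤ tt θ := Finset.sum_nonneg fun k _ => sq_nonneg _

theorem sq_le_tt {d : ℕ} (θ : Fin d → ℝ) (k : Fin d) : θ k ^ 2 ≤ tt θ :=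
  Finset.single_le_sum (f := fun k => θ k ^ 2) (fun k _ => sq_nonneg _) (Finset.mem_univ k)

theorem nz_01 {d : ℕ} (i : Fin (d + 1) → ℤ) (k : Fin d) : 0 ≤ nz i k ∧ nz i k ≤ 1 := by
  unfold nz; split_ifs <;> simp

theorem cf_est {d : ℕ} (i : Fin (d + 1) → ℤ) (θ : Fin d → ℝ) (hθ : ∀ k, |θ k| ≤ Real.pi / 2) :
    0 ≤ cf i (fun k => Real.cos (θ k)) ∧ cf i (fun k => Real.cos (θ k)) ≤ 1 ∧
    1 - cf i (fun k => Real.cos (θ k)) ≤ tt θ ∧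
    cf i (fun k => Real.cos (θ k)) ≤ 1 - (1 / ((d:ℝ) + 1)) * ∑ k, nz i k * (2 / Real.pi ^ 2 * θ k ^ 2) ∧
    |cf i (fun k => Real.cos (θ k)) - (1 - 1 / 2 * ∑ k, nz i k * θ k ^ 2)| ≤ 4 * tt θ ^ 2 := by
  have hpi := Real.pi_pos
  set e : Fin d → ℝ := fun k => nz i k * (1 - Real.cos (θ k)) with he
  have hcf : cf i (fun k => Real.cos (θ k)) = ∏ k, (1 - e k) := by
    unfold cf
    refine Finset.prod_congr rfl fun k _ => ?_
    rw [he]; unfold nz; split_ifs with h <;> simp [h]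
  have hc0 : ∀ k, 0 ≤ Real.cos (θ k) := fun k => Real.cos_nonneg_of_mem_Icc (abs_le.mp (hθ k))
  have hc1 : ∀ k, Real.cos (θ k) ≤ 1 := fun k => Real.cos_le_one _
  have h0 : ∀ k, 0 ≤ e k := fun k => mul_nonneg (nz_01 i k).1 (by linarith [hc1 k])
  have h1 : ∀ k, e k ≤ 1 := fun k => mul_le_one₀ (nz_01 i k).2 (by linarith [hc1 k]) (by linarith [hc0 k])
  have hle : ∀ k, e k ≤ 1 / 2 * θ k ^ 2 := by
    intro k
    have h2 := Real.one_sub_sq_div_two_le_cos (x := θ k)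
    calc e k ≤ 1 * (1 - Real.cos (θ k)) := mul_le_mul_of_nonneg_right (nz_01 i k).2 (by linarith [hc1 k])
      _ ≤ _ := by linarith
  have hsum0 : 0 ≤ ∑ k, e k := Finset.sum_nonneg fun k _ => h0 k
  have hsum : ∑ k, e k ≤ 1 / 2 * tt θ := by
    rw [tt, Finset.mul_sum]; exact Finset.sum_le_sum fun k _ => hle k
  obtain ⟨i1, i2, i3⟩ := prod_one_sub_lower Finset.univ e (fun k _ => h0 k) (fun k _ => h1 k)
  have ht := tt_nonneg θ
  rw [hcf]
  refine ⟨i3, i2, by linarith, ?_, ?_⟩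
  · refine (prod_one_sub_avg d e h0 h1).trans ?_
    have : ∑ k, nz i k * (2 / Real.pi ^ 2 * θ k ^ 2) ≤ ∑ k, e k := by
      refine Finset.sum_le_sum fun k _ => mul_le_mul_of_nonneg_left ?_ (nz_01 i k).1
      have := cos_up (θ k) ((hθ k).trans (by linarith))
      linarith
    have hd : (0:ℝ) ≤ 1 / (d + 1) := by positivity
    have := mul_le_mul_of_nonneg_left this hd
    linarith
  · have hq : |∑ k, e k - 1 / 2 * ∑ k, nz i k * θ k ^ 2| ≤ 3 * tt θ ^ 2 := by
      rw [Finset.mul_sum, ← Finset.sum_sub_distrib]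
      refine (Finset.abs_sum_le_sum_abs _ _).trans ?_
      calc ∑ k, |e k - 1 / 2 * (nz i k * θ k ^ 2)| ≤ ∑ k, 3 * (tt θ * θ k ^ 2) := by
            refine Finset.sum_le_sum fun k _ => ?_
            have e1 : e k - 1 / 2 * (nz i k * θ k ^ 2) = -(nz i k * (Real.cos (θ k) - (1 - θ k ^ 2 / 2))) := by rw [he]; ring
            rw [e1, abs_neg, abs_mul, abs_of_nonneg (nz_01 i k).1]
            have := cos_quart (θ k)
            calc _ ≤ 1 * (3 * θ k ^ 4) := mul_le_mul (nz_01 i k).2 this (abs_nonneg _) (by norm_num)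
              _ = 3 * (θ k ^ 2 * θ k ^ 2) := by ring
              _ ≤ _ := by gcongr; exact sq_le_tt θ k
        _ = 3 * tt θ ^ 2 := by rw [← Finset.mul_sum, ← Finset.mul_sum]; rw [sq]; rfl
    have hp := prod_one_sub_upper Finset.univ e (fun k _ => h0 k) (fun k _ => h1 k)
    have h3 : (∑ k, e k) ^ 2 ≤ tt θ ^ 2 := by gcongr; linarith
    rw [abs_le] at hq hp ⊢
    constructor <;> linarith [hq.1, hq.2, hp.1, hp.2]

theorem cf_abs {d : ℕ} (i : Fin (d + 1) → ℤ) (θ : Fin d → ℝ) (ε : Fin d → Bool) (hθ : ∀ k, |θ k| ≤ Real.pi / 2) :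
    |cf i (fun k => sg (ε k) * Real.cos (θ k))| = cf i (fun k => Real.cos (θ k)) := by
  unfold cf
  rw [Finset.abs_prod]
  refine Finset.prod_congr rfl fun k _ => ?_
  have hc0 : 0 ≤ Real.cos (θ k) := Real.cos_nonneg_of_mem_Icc (abs_le.mp (hθ k))
  split_ifs
  · simp
  · rw [abs_mul, abs_of_nonneg hc0]; unfold sg; split_ifs <;> simp

theorem sum_nz (d : ℕ) (S : Finset (Fin (d + 1) → ℤ)) (w : (Fin (d + 1) → ℤ) → ℝ)
    (hstep : ∀ i ∈ S, (∀ j, i j = -1 ∨ i j = 0 ∨ i j = 1) ∧ i ≠ 0)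
    (hsym : ∀ k : Fin d, SymmetricAxis (d + 1) S w (Fin.castSucc k)) (r : ℝ) (k : Fin d) :
    ∑ i ∈ S, w i * (nz i k * r ^ (i (Fin.last d))) = 2 * BkAt d S w k r := by
  have h1 : BkAt d S w k r = ∑ i ∈ S, w i * (if i k.castSucc = 1 then r ^ (i (Fin.last d)) else 0) := by
    unfold BkAt
    rw [Finset.sum_filter]
    refine Finset.sum_congr rfl fun i _ => ?_
    split_ifs <;> simp
  have h2 := h1
  rw [sym_half d S w k (hsym k)] at h2
  rw [two_mul]
  nth_rewrite 1 [h1]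
  rw [h2, ← Finset.sum_add_distrib]
  refine Finset.sum_congr rfl fun i hi => ?_
  rw [← mul_add]
  congr 1
  have hne : Fin.last d ≠ k.castSucc := (Fin.castSucc_lt_last k).ne'
  rw [Function.update_self, Function.update_of_ne hne]
  unfold nz
  rcases (hstep i hi).1 k.castSucc with h | h | h <;> simp [h]

/-- data of the box estimates -/
theorem box_est (d : ℕ) (S : Finset (Fin (d + 1) → ℤ)) (w : (Fin (d + 1) → ℤ) → ℝ)
    (hstep : ∀ i ∈ S, (∀ j, i j = -1 ∨ i j = 0 ∨ i j = 1) ∧ i ≠ 0)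
    (hw : ∀ i ∈ S, 0 < w i)
    (hsym : ∀ k : Fin d, SymmetricAxis (d + 1) S w (Fin.castSucc k))
    (hfwd : ∀ k : Fin (d + 1), ∃ i ∈ S, i k = 1) (ρ : ℝ) (hρ : 0 < ρ) :
    0 < SAt d S w ρ ∧ (∀ k, 0 < BkAt d S w k ρ) ∧ 
    ∃ c : ℝ, 0 < c ∧ (∀ k, c ≤ BkAt d S w k ρ / SAt d S w ρ) ∧ ∀ θ : Fin d → ℝ, (∀ k, |θ k| ≤ Real.pi / 2) →
      ∑ i ∈ S, w i * (cf i (fun k => Real.cos (θ k)) * ρ ^ (i (Fin.last d))) ≤ SAt d S w ρ * Real.exp (-(c * tt θ)) ∧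
      |(∑ i ∈ S, w i * (cf i (fun k => Real.cos (θ k)) * ρ ^ (i (Fin.last d)))) / SAt d S w ρ - Real.exp (-∑ k, BkAt d S w k ρ / SAt d S w ρ * θ k ^ 2)| ≤ 5 * tt θ ^ 2 := by
  have hpi := Real.pi_pos
  have hW : ∀ i ∈ S, 0 < w i * ρ ^ (i (Fin.last d)) := fun i hi => mul_pos (hw i hi) (zpow_pos hρ _)
  obtain ⟨i0, hi0, -⟩ := hfwd (Fin.last d)
  have hSp : 0 < SAt d S w ρ := Finset.sum_pos hW ⟨i0, hi0⟩
  have hBp : ∀ k, 0 < BkAt d S w k ρ := by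
    intro k
    obtain ⟨i1, hi1, hk⟩ := hfwd k.castSucc
    exact Finset.sum_pos (fun i hi => hW i (Finset.mem_filter.mp hi).1) ⟨i1, Finset.mem_filter.mpr ⟨hi1, hk⟩⟩
  have hBS : ∀ k, BkAt d S w k ρ ≤ SAt d S w ρ := fun k =>
    Finset.sum_le_sum_of_subset_of_nonneg (Finset.filter_subset _ _) (fun i hi _ => (hW i hi).le)
  refine ⟨hSp, hBp, ?_⟩
  set T := SAt d S w ρ with hT
  set κ : Fin d → ℝ := fun k => BkAt d S w k ρ / T with hκ
  have hκp : ∀ k, 0 < κ k := fun k => div_pos (hBp k) hSp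
  have hκ1 : ∀ k, κ k ≤ 1 := fun k => (div_le_one hSp).mpr (hBS k)
  obtain ⟨c0, hc0, hc0κ⟩ : ∃ c : ℝ, 0 < c ∧ ∀ k, c ≤ κ k := by
    have hpos : ∀ k ∈ (Finset.univ : Finset (Fin d)), 0 ≤ 1 / κ k := fun k _ => (one_div_pos.mpr (hκp k)).le
    have hsn := Finset.sum_nonneg hpos
    refine ⟨1 / (1 + ∑ k, 1 / κ k), by positivity, fun k => ?_⟩
    rw [div_le_iff₀ (by positivity)]
    have h1 := Finset.single_le_sum hpos (Finset.mem_univ k)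
    have h2 : κ k * (1 / κ k) = 1 := by have := (hκp k).ne'; field_simp
    nlinarith [mul_le_mul_of_nonneg_left h1 (hκp k).le, hκp k]
  set c1 : ℝ := 1 / ((d:ℝ) + 1) * (2 / Real.pi ^ 2) * 2 with hc1
  have hc1p : 0 < c1 := by positivity
  have hc11 : c1 ≤ 1 := by
    have : (1:ℝ) / (d + 1) ≤ 1 := by rw [div_le_one (by positivity)]; linarith [(Nat.cast_nonneg d : (0:ℝ) ≤ d)]
    have h2 : 2 / Real.pi ^ 2 ≤ 1 / 2 := by
      rw [div_le_div_iff₀ (by positivity) (by norm_num)]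
      nlinarith [Real.pi_gt_three]
    have h3 : 1 / ((d:ℝ) + 1) * (2 / Real.pi ^ 2) ≤ 1 * (1/2) := by gcongr
    rw [hc1]; linarith
  refine ⟨c1 * c0, by positivity, fun k => ?_, ?_⟩
  · calc c1 * c0 ≤ 1 * c0 := by gcongr
      _ ≤ _ := by rw [one_mul]; exact hc0κ k
  intro θ hθ
  have hce := fun i => cf_est i θ hθ
  have hnzsum : ∀ v : ℝ, ∑ i ∈ S, w i * ((1 - v * ∑ k, nz i k * θ k ^ 2) * ρ ^ (i (Fin.last d))) = T * (1 - v * 2 * ∑ k, κ k * θ k ^ 2) := by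
    intro v
    have : ∑ i ∈ S, w i * ((1 - v * ∑ k, nz i k * θ k ^ 2) * ρ ^ (i (Fin.last d))) = T - v * ∑ k, θ k ^ 2 * ∑ i ∈ S, w i * (nz i k * ρ ^ (i (Fin.last d))) := by
      simp only [Finset.mul_sum]
      rw [Finset.sum_comm, hT, SAt, ← Finset.sum_sub_distrib]
      refine Finset.sum_congr rfl fun i _ => ?_
      rw [sub_mul, mul_sub, one_mul, Finset.sum_mul, Finset.mul_sum]
      congr 1
      refine Finset.sum_congr rfl fun k _ => ?_
      ring
    rw [this]
    simp only [sum_nz d S w hstep hsym ρ]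
    rw [mul_sub, mul_one, Finset.mul_sum, Finset.mul_sum, Finset.mul_sum]
    congr 1
    refine Finset.sum_congr rfl fun k _ => ?_
    rw [hκ]; field_simp
  set g := ∑ k, κ k * θ k ^ 2 with hg
  have hgt : g ≤ tt θ := Finset.sum_le_sum fun k _ => mul_le_of_le_one_left (sq_nonneg _) (hκ1 k)
  have hg0 : 0 ≤ g := Finset.sum_nonneg fun k _ => mul_nonneg (hκp k).le (sq_nonneg _)
  have hgc : c0 * tt θ ≤ g := by
    rw [tt, Finset.mul_sum]
    exact Finset.sum_le_sum fun k _ => mul_le_mul_of_nonneg_right (hc0κ k) (sq_nonneg _)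
  have htn := tt_nonneg θ
  constructor
  · calc ∑ i ∈ S, w i * (cf i (fun k => Real.cos (θ k)) * ρ ^ (i (Fin.last d)))
        ≤ ∑ i ∈ S, w i * ((1 - (1 / ((d:ℝ) + 1) * (2 / Real.pi ^ 2)) * ∑ k, nz i k * θ k ^ 2) * ρ ^ (i (Fin.last d))) := by
          refine Finset.sum_le_sum fun i hi => mul_le_mul_of_nonneg_left (mul_le_mul_of_nonneg_right ?_ (zpow_pos hρ _).le) (hw i hi).le
          refine (hce i).2.2.2.1.trans (le_of_eq ?_)
          rw [mul_assoc (1 / ((d:ℝ) + 1)), Finset.mul_sum (a := 2 / Real.pi ^ 2)]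
          congr 2
          refine Finset.sum_congr rfl fun k _ => ?_
          ring
      _ = T * (1 - c1 * g) := hnzsum _
      _ ≤ T * Real.exp (-(c1 * c0 * tt θ)) := by
        apply mul_le_mul_of_nonneg_left _ hSp.le
        have h1 := Real.add_one_le_exp (-(c1 * g))
        have h2 : Real.exp (-(c1 * g)) ≤ Real.exp (-(c1 * c0 * tt θ)) := by
          apply Real.exp_le_exp.mpr
          have := mul_le_mul_of_nonneg_left hgc hc1p.le
          linarith
        linarith
  · set u := ∑ i ∈ S, w i * (cf i (fun k => Real.cos (θ k)) * ρ ^ (i (Fin.last d))) with hu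
    have h1 : |u - T * (1 - g)| ≤ T * (4 * tt θ ^ 2) := by
      have h2 := hnzsum (1/2)
      rw [show (1/2 * 2 : ℝ) = 1 by norm_num, one_mul] at h2
      rw [← h2, hu, ← Finset.sum_sub_distrib, hT, SAt, Finset.sum_mul]
      refine (Finset.abs_sum_le_sum_abs _ _).trans (Finset.sum_le_sum fun i hi => ?_)
      rw [← mul_sub, ← sub_mul, abs_mul, abs_mul, abs_of_pos (hw i hi), abs_of_pos (zpow_pos hρ _)]
      have h5 := mul_le_mul_of_nonneg_left (hce i).2.2.2.2 (hW i hi).le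
      calc _ = w i * ρ ^ (i (Fin.last d)) * |cf i (fun k => Real.cos (θ k)) - (1 - 1 / 2 * ∑ k, nz i k * θ k ^ 2)| := by ring
        _ ≤ _ := h5
    have h3 := exp_quad g hg0
    have h4 : g ^ 2 ≤ tt θ ^ 2 := by gcongr
    have h5 : |u / T - (1 - g)| ≤ 4 * tt θ ^ 2 := by
      rw [show u / T - (1 - g) = (u - T * (1 - g)) / T by field_simp, abs_div, abs_of_pos hSp, div_le_iff₀ hSp]
      linarith
    rw [abs_le] at h3 h5 ⊢
    constructor <;> linarith [h3.1, h3.2, h5.1, h5.2]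


theorem gauss_prod (d : ℕ) (b : Fin d → ℝ) (hb : ∀ k, 0 < b k) :
    MeasureTheory.Integrable (fun θ : Fin d → ℝ => Real.exp (-∑ k, b k * θ k ^ 2)) ∧
    ∫ θ : Fin d → ℝ, Real.exp (-∑ k, b k * θ k ^ 2) = ∏ k, Real.sqrt (Real.pi / b k) := by
  have e : (fun θ : Fin d → ℝ => Real.exp (-∑ k, b k * θ k ^ 2)) = fun θ => ∏ k, Real.exp (-(b k) * θ k ^ 2) := by
    ext θ
    rw [← Real.exp_sum, ← Finset.sum_neg_distrib]
    congr 1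
    refine Finset.sum_congr rfl fun k _ => by ring
  rw [e]
  constructor
  · exact MeasureTheory.Integrable.fintype_prod (f := fun k x => Real.exp (-(b k) * x ^ 2)) (fun k => integrable_exp_neg_mul_sq (hb k))
  · rw [MeasureTheory.integral_fintype_prod_volume_eq_prod (fun k x => Real.exp (-(b k) * x ^ 2))]
    refine Finset.prod_congr rfl fun k _ => integral_gaussian (b k)

theorem cf_one {d : ℕ} (i : Fin (d + 1) → ℤ) : cf i (fun _ => 1) = 1 := by
  unfold cf; simp

theorem co_one (d : ℕ) (S : Finset (Fin (d + 1) → ℤ)) (w : (Fin (d + 1) → ℤ) → ℝ) (e : ℤ) :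
    co d S w e (fun _ => 1) = ∑ i ∈ S.filter (fun i => i (Fin.last d) = e), w i := by
  unfold co; simp [cf_one]

theorem SAt_eq (d : ℕ) (S : Finset (Fin (d + 1) → ℤ)) (w : (Fin (d + 1) → ℤ) → ℝ)
    (hstep : ∀ i ∈ S, (∀ j, i j = -1 ∨ i j = 0 ∨ i j = 1) ∧ i ≠ 0) (r : ℝ) :
    SAt d S w r = (∑ i ∈ S.filter (fun i => i (Fin.last d) = -1), w i) / r + (∑ i ∈ S.filter (fun i => i (Fin.last d) = 0), w i) +
      (∑ i ∈ S.filter (fun i => i (Fin.last d) = 1), w i) * r := by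
  have := co_sum d S w hstep (fun _ => 1) (fun e => r ^ e)
  simp only [cf_one, one_mul, co_one, zpow_neg, zpow_one, zpow_zero, mul_one] at this
  rw [SAt, this, div_eq_mul_inv]

theorem co_est (d : ℕ) (S : Finset (Fin (d + 1) → ℤ)) (w : (Fin (d + 1) → ℤ) → ℝ)
    (hw : ∀ i ∈ S, 0 < w i) (e : ℤ) (θ : Fin d → ℝ) (hθ : ∀ k, |θ k| ≤ Real.pi / 2) :
    0 ≤ co d S w e (fun k => Real.cos (θ k)) ∧
    |co d S w e (fun k => Real.cos (θ k)) - ∑ i ∈ S.filter (fun i => i (Fin.last d) = e), w i| ≤ (∑ i ∈ S.filter (fun i => i (Fin.last d) = e), w i) * tt θ ∧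
    ∀ ε : Fin d → Bool, |co d S w e (fun k => sg (ε k) * Real.cos (θ k))| ≤ co d S w e (fun k => Real.cos (θ k)) := by
  have hw' : ∀ i ∈ S.filter (fun i => i (Fin.last d) = e), 0 < w i := fun i hi => hw i (Finset.mem_filter.mp hi).1
  refine ⟨?_, ?_, ?_⟩
  · exact Finset.sum_nonneg fun i hi => mul_nonneg (hw' i hi).le (cf_est i θ hθ).1
  · unfold co
    rw [← Finset.sum_sub_distrib, Finset.sum_mul]
    refine (Finset.abs_sum_le_sum_abs _ _).trans (Finset.sum_le_sum fun i hi => ?_)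
    obtain ⟨h1, h2, h3, -⟩ := cf_est i θ hθ
    rw [show ∀ x y : ℝ, x * y - x = -(x * (1 - y)) by intros; ring, abs_neg, abs_mul, abs_of_pos (hw' i hi), abs_of_nonneg (by linarith : 0 ≤ 1 - cf i (fun k => Real.cos (θ k)))]
    exact mul_le_mul_of_nonneg_left h3 (hw' i hi).le
  · intro ε
    unfold co
    refine (Finset.abs_sum_le_sum_abs _ _).trans (Finset.sum_le_sum fun i hi => ?_)
    rw [abs_mul, cf_abs i θ ε hθ, abs_of_pos (hw' i hi)]

theorem pw_all (d : ℕ) (S : Finset (Fin (d + 1) → ℤ)) (w : (Fin (d + 1) → ℤ) → ℝ)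
    (hstep : ∀ i ∈ S, (∀ j, i j = -1 ∨ i j = 0 ∨ i j = 1) ∧ i ≠ 0)
    (hw : ∀ i ∈ S, 0 < w i)
    (hsym : ∀ k : Fin d, SymmetricAxis (d + 1) S w (Fin.castSucc k))
    (hfwd : ∀ k : Fin (d + 1), ∃ i ∈ S, i k = 1)
    (A B Q ρ : ℝ) (hA : A = ∑ i ∈ S.filter (fun i => i (Fin.last d) = -1), w i)
    (hB : B = ∑ i ∈ S.filter (fun i => i (Fin.last d) = 1), w i)
    (hQ : Q = ∑ i ∈ S.filter (fun i => i (Fin.last d) = 0), w i)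
    (hB0 : 0 < B) (hAB : B < A) (hQ0 : 0 ≤ Q) (hQe : Q = 0 → S.filter (fun i => i (Fin.last d) = 0) = ∅) (hρ : ρ = Real.sqrt (A / B)) :
    ∃ C c : ℝ, 0 < C ∧ 0 < c ∧ (∀ k, c ≤ BkAt d S w k ρ / SAt d S w ρ) ∧ ∀ n : ℕ, 2 ≤ n → ∀ θ : Fin d → ℝ, (∀ k, |θ k| ≤ Real.pi / 2) →
      |Vr (co d S w (-1) (fun k => Real.cos (θ k))) (co d S w 0 (fun k => Real.cos (θ k))) (co d S w 1 (fun k => Real.cos (θ k))) n 0 / SAt d S w ρ ^ n -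
        (n:ℝ) ^ (-(3/2) : ℝ) * KF Q n (A, B, Q) * Real.exp (-(n * ∑ k, BkAt d S w k ρ / SAt d S w ρ * θ k ^ 2))| ≤ C * (n:ℝ) ^ (-(5/2) : ℝ) * Real.exp (-(c * n * tt θ)) := by
  have hAp : 0 < A := by linarith
  have hρ0 : 0 < ρ := by rw [hρ]; positivity
  obtain ⟨hSp, hBp, c, hc, hcκ, H⟩ := box_est d S w hstep hw hsym hfwd ρ hρ0
  have hSA := SAt_eq d S w hstep ρ
  rw [← hA, ← hB, ← hQ] at hSA
  obtain ⟨C, c', hC, hc', HM⟩ := main_pw A B Q (5 + A + B + Q) c ρ (SAt d S w ρ) hB0 hAB hQ0 (by positivity) hc hρ hSA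
  refine ⟨C, min c c', hC, lt_min hc hc', fun k => (min_le_left _ _).trans (hcκ k), ?_⟩
  intro n hn θ hθ
  obtain ⟨a0, a1, -⟩ := co_est d S w hw (-1) θ hθ
  obtain ⟨q0, q1, -⟩ := co_est d S w hw 0 θ hθ
  obtain ⟨b0, b1, -⟩ := co_est d S w hw 1 θ hθ
  obtain ⟨u1, u2⟩ := H θ hθ
  rw [← hA] at a1
  rw [← hB] at b1
  rw [← hQ] at q1
  have ht := tt_nonneg θ
  have hu := co_sum d S w hstep (fun k => Real.cos (θ k)) (fun e => ρ ^ e)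
  simp only [zpow_neg, zpow_one, zpow_zero, mul_one, ← div_eq_mul_inv] at hu
  rw [hu] at u1 u2
  have hM := HM n hn _ _ _ (tt θ) _ a0 b0 q0 ht ?_ ?_ u1 (u2.trans ?_) ?_
  · refine hM.trans ?_
    gcongr
    exact min_le_right _ _
  · rw [Prod.dist_eq, Prod.dist_eq, Real.dist_eq, Real.dist_eq, Real.dist_eq]
    refine max_le (a1.trans ?_) (max_le (b1.trans ?_) (q1.trans ?_)) <;> gcongr <;> linarith
  · intro h
    unfold co; rw [hQe h]; simp
  · gcongr; linarith
  · rw [tt, Finset.mul_sum]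
    exact Finset.sum_le_sum fun k _ => mul_le_mul_of_nonneg_right (hcκ k) (sq_nonneg _)


def io {d : ℕ} (ε : Fin d → Bool) : ℝ := if ∀ k, ε k = true then 1 else 0

theorem prod_fac {d : ℕ} (ε : Fin d → Bool) (θ : Fin d → ℝ) :
    |∏ k, (1 + sg (ε k) * Real.cos (θ k)) - io ε * 2 ^ d| ≤ 2 ^ d * tt θ := by
  have hc : ∀ k, 0 ≤ 1 - Real.cos (θ k) ∧ 1 - Real.cos (θ k) ≤ 2 ∧ 1 - Real.cos (θ k) ≤ θ k ^ 2 / 2 := fun k =>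
    ⟨by linarith [Real.cos_le_one (θ k)], by linarith [Real.neg_one_le_cos (θ k)], by linarith [Real.one_sub_sq_div_two_le_cos (x := θ k)]⟩
  have ht := tt_nonneg θ
  by_cases h : ∀ k, ε k = true
  · have e1 : ∏ k, (1 + sg (ε k) * Real.cos (θ k)) = 2 ^ d * ∏ k, (1 - (1 - Real.cos (θ k)) / 2) := by
      have : (2:ℝ) ^ d = ∏ _k : Fin d, (2:ℝ) := by simp
      rw [this, ← Finset.prod_mul_distrib]
      refine Finset.prod_congr rfl fun k _ => ?_
      simp only [sg, h k, if_true]; ring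
    obtain ⟨i1, i2, i3⟩ := prod_one_sub_lower Finset.univ (fun k => (1 - Real.cos (θ k)) / 2) (fun k _ => by linarith [hc k]) (fun k _ => by linarith [hc k])
    have hs : ∑ k, (1 - Real.cos (θ k)) / 2 ≤ tt θ := by
      refine Finset.sum_le_sum fun k _ => ?_
      have := (hc k).2.2
      nlinarith [sq_nonneg (θ k)]
    rw [e1, io, if_pos h, one_mul, show ∀ x y : ℝ, x * y - x = -(x * (1 - y)) by intros; ring, abs_neg, abs_of_nonneg (mul_nonneg (by positivity) (by linarith))]
    gcongr
    linarith
  · rw [io, if_neg h]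
    push Not at h
    obtain ⟨k, hk⟩ := h
    have hf : ∀ j, 0 ≤ 1 + sg (ε j) * Real.cos (θ j) ∧ 1 + sg (ε j) * Real.cos (θ j) ≤ 2 := by
      intro j
      have := hc j
      unfold sg; split_ifs <;> constructor <;> linarith
    have hk2 : 1 + sg (ε k) * Real.cos (θ k) ≤ tt θ := by
      have := (hc k).2.2
      have h2 := sq_le_tt θ k
      rw [show sg (ε k) = -1 by simp [sg, hk]]
      nlinarith [sq_nonneg (θ k)]
    rw [zero_mul, sub_zero, abs_of_nonneg (Finset.prod_nonneg fun j _ => (hf j).1), ← Finset.mul_prod_erase Finset.univ _ (Finset.mem_univ k), mul_comm]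
    refine mul_le_mul ?_ hk2 (hf k).1 (by positivity)
    refine (Finset.prod_le_prod (fun j _ => (hf j).1) (fun j _ => (hf j).2)).trans ?_
    rw [Finset.prod_const]
    refine pow_le_pow_right₀ (by norm_num) ?_
    refine (Finset.card_le_univ _).trans ?_
    simp

theorem n3_eq (n : ℕ) (hn : 2 ≤ n) : (n:ℝ) ^ (-(3/2) : ℝ) = n * (n:ℝ) ^ (-(5/2) : ℝ) := by
  have hn0 : (0:ℝ) < n := by positivity
  nth_rewrite 2 [← Real.rpow_one (n:ℝ)]
  rw [← Real.rpow_add hn0]; norm_num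

theorem pw_eps (d : ℕ) (S : Finset (Fin (d + 1) → ℤ)) (w : (Fin (d + 1) → ℤ) → ℝ)
    (hstep : ∀ i ∈ S, (∀ j, i j = -1 ∨ i j = 0 ∨ i j = 1) ∧ i ≠ 0)
    (hw : ∀ i ∈ S, 0 < w i)
    (hsym : ∀ k : Fin d, SymmetricAxis (d + 1) S w (Fin.castSucc k))
    (hfwd : ∀ k : Fin (d + 1), ∃ i ∈ S, i k = 1)
    (A B Q ρ : ℝ) (hA : A = ∑ i ∈ S.filter (fun i => i (Fin.last d) = -1), w i)
    (hB : B = ∑ i ∈ S.filter (fun i => i (Fin.last d) = 1), w i)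
    (hQ : Q = ∑ i ∈ S.filter (fun i => i (Fin.last d) = 0), w i)
    (hB0 : 0 < B) (hAB : B < A) (hQ0 : 0 ≤ Q) (hQe : Q = 0 → S.filter (fun i => i (Fin.last d) = 0) = ∅) (hρ : ρ = Real.sqrt (A / B)) :
    ∃ C c : ℝ, 0 < C ∧ 0 < c ∧ ∀ n : ℕ, 2 ≤ n → ∀ ε : Fin d → Bool, ∀ θ : Fin d → ℝ,
      ((∀ k, |θ k| ≤ Real.pi / 2) →
      |(∏ k, (1 + sg (ε k) * Real.cos (θ k))) * Vr (co d S w (-1) (fun k => sg (ε k) * Real.cos (θ k))) (co d S w 0 (fun k => sg (ε k) * Real.cos (θ k))) (co d S w 1 (fun k => sg (ε k) * Real.cos (θ k))) n 0 / SAt d S w ρ ^ n -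
        io ε * 2 ^ d * ((n:ℝ) ^ (-(3/2) : ℝ) * KF Q n (A, B, Q) * Real.exp (-(n * ∑ k, BkAt d S w k ρ / SAt d S w ρ * θ k ^ 2)))| ≤ C * (n:ℝ) ^ (-(5/2) : ℝ) * Real.exp (-(c * n * tt θ))) ∧
      ((¬ ∀ k, |θ k| ≤ Real.pi / 2) → 
      |io ε * 2 ^ d * ((n:ℝ) ^ (-(3/2) : ℝ) * KF Q n (A, B, Q) * Real.exp (-(n * ∑ k, BkAt d S w k ρ / SAt d S w ρ * θ k ^ 2)))| ≤ C * (n:ℝ) ^ (-(5/2) : ℝ) * Real.exp (-(c * n * tt θ))) := by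
  obtain ⟨C, c, hC, hc, hκ, H⟩ := pw_all d S w hstep hw hsym hfwd A B Q ρ hA hB hQ hB0 hAB hQ0 hQe hρ
  have hAp : 0 < A := by linarith
  have hρ0 : 0 < ρ := by rw [hρ]; positivity
  obtain ⟨hSp, -, -⟩ := box_est d S w hstep hw hsym hfwd ρ hρ0
  set Kb := |F1 (A, B, Q)| + |F2 (A, B, Q)| with hKb
  have hKb0 : 0 ≤ Kb := by positivity
  refine ⟨2 ^ d * ((C + Kb) * (1 / (c / 2)) + C), c / 2, by positivity, by positivity, ?_⟩
  intro n hn ε θ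
  have hn0 : (0:ℝ) < n := by positivity
  have hn1 : (1:ℝ) ≤ n := by exact_mod_cast (by omega : 1 ≤ n)
  have ht := tt_nonneg θ
  have hsub : ∀ t, t = tt θ → 2 ^ d * ((C + Kb) * (t * (n:ℝ) ^ (-(3/2) : ℝ)) + C * (n:ℝ) ^ (-(5/2) : ℝ)) * Real.exp (-(c * n * t)) ≤
      2 ^ d * ((C + Kb) * (1 / (c / 2)) + C) * (n:ℝ) ^ (-(5/2) : ℝ) * Real.exp (-(c / 2 * n * t)) := by
    rintro t rfl
    have h1 := absorb 1 (c / 2) (n * tt θ) (by positivity) (by positivity)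
    simp only [pow_one, Nat.factorial_one, Nat.cast_one] at h1
    have e1 : 2 * (c / 2) * (n * tt θ) = c * n * tt θ := by ring
    have e2 : c / 2 * (n * tt θ) = c / 2 * n * tt θ := by ring
    rw [e1, e2] at h1
    have h2 : Real.exp (-(c * n * tt θ)) ≤ Real.exp (-(c / 2 * n * tt θ)) := by
      apply Real.exp_le_exp.mpr
      have : 0 ≤ c * n * tt θ := by positivity
      linarith
    have h5 : (0:ℝ) ≤ (n:ℝ) ^ (-(5/2) : ℝ) := by positivity
    rw [n3_eq n hn]
    calc _ = 2 ^ d * (n:ℝ) ^ (-(5/2) : ℝ) * ((C + Kb) * (n * tt θ * Real.exp (-(c * n * tt θ))) + C * Real.exp (-(c * n * tt θ))) := by ring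
      _ ≤ 2 ^ d * (n:ℝ) ^ (-(5/2) : ℝ) * ((C + Kb) * (1 / (c / 2) * Real.exp (-(c / 2 * n * tt θ))) + C * Real.exp (-(c / 2 * n * tt θ))) := by gcongr
      _ = _ := by ring
  have hsub' := hsub _ rfl
  clear hsub
  set E := Real.exp (-(c * n * tt θ)) with hE
  have hE0 : 0 < E := Real.exp_pos _
  set M := (n:ℝ) ^ (-(3/2) : ℝ) * KF Q n (A, B, Q) * Real.exp (-(n * ∑ k, BkAt d S w k ρ / SAt d S w ρ * θ k ^ 2)) with hM
  have h30 : 0 ≤ (n:ℝ) ^ (-(3/2) : ℝ) := by positivity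
  have h50 : 0 ≤ (n:ℝ) ^ (-(5/2) : ℝ) := by positivity
  have h53 : (n:ℝ) ^ (-(5/2) : ℝ) ≤ (n:ℝ) ^ (-(3/2) : ℝ) := Real.rpow_le_rpow_of_exponent_le hn1 (by norm_num)
  have hMb : |M| ≤ Kb * (n:ℝ) ^ (-(3/2) : ℝ) * E := by
    rw [hM, abs_mul, abs_mul, abs_of_nonneg h30, Real.abs_exp, mul_comm Kb]
    gcongr
    · exact KF_bdd Q n _
    · rw [hE]
      apply Real.exp_le_exp.mpr
      have : c * tt θ ≤ ∑ k, BkAt d S w k ρ / SAt d S w ρ * θ k ^ 2 := by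
        rw [tt, Finset.mul_sum]
        exact Finset.sum_le_sum fun k _ => mul_le_mul_of_nonneg_right (hκ k) (sq_nonneg _)
      nlinarith
  have hio : |io ε| ≤ 1 := by unfold io; split_ifs <;> simp
  constructor
  · intro hθ
    refine le_trans ?_ hsub'
    have hV := H n hn θ hθ
    rw [← hM, ← hE] at hV
    obtain ⟨-, -, a1⟩ := co_est d S w hw (-1) θ hθ
    obtain ⟨-, -, q1⟩ := co_est d S w hw 0 θ hθ
    obtain ⟨-, -, b1⟩ := co_est d S w hw 1 θ hθ
    have hVe := Vr_abs_le _ _ _ _ _ _ (a1 ε) (q1 ε) (b1 ε) n 0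
    have hP := prod_fac ε θ
    have hTn : 0 < SAt d S w ρ ^ n := by positivity
    rw [mul_div_assoc]
    have hVe' := div_le_div_of_nonneg_right hVe hTn.le
    have eab := abs_div (Vr (co d S w (-1) (fun k => sg (ε k) * Real.cos (θ k))) (co d S w 0 (fun k => sg (ε k) * Real.cos (θ k))) (co d S w 1 (fun k => sg (ε k) * Real.cos (θ k))) n 0) (SAt d S w ρ ^ n)
    rw [abs_of_pos hTn] at eab
    rw [← eab] at hVe'
    set V0 := Vr (co d S w (-1) (fun k => Real.cos (θ k))) (co d S w 0 (fun k => Real.cos (θ k))) (co d S w 1 (fun k => Real.cos (θ k))) n 0 / SAt d S w ρ ^ n with hV0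
    have hV0b : |V0| ≤ (C + Kb) * (n:ℝ) ^ (-(3/2) : ℝ) * E := by
      have h1 : |V0| ≤ |V0 - M| + |M| := by
        have := abs_add_le (V0 - M) M
        simpa using this
      have h2 : C * (n:ℝ) ^ (-(5/2) : ℝ) * E ≤ C * (n:ℝ) ^ (-(3/2) : ℝ) * E := by gcongr
      nlinarith
    by_cases h : ∀ k, ε k = true
    · have es : (fun k => sg (ε k) * Real.cos (θ k)) = fun k => Real.cos (θ k) := by
        ext k; simp [sg, h k]
      have ei : io ε = 1 := by rw [io, if_pos h]
      rw [ei, one_mul] at hP ⊢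
      rw [es, ← hV0]
      set P := ∏ k, (1 + sg (ε k) * Real.cos (θ k)) with hPP
      calc |P * V0 - 2 ^ d * M| = |(P - 2 ^ d) * V0 + 2 ^ d * (V0 - M)| := by ring_nf
        _ ≤ |P - 2 ^ d| * |V0| + 2 ^ d * |V0 - M| := by
          refine (abs_add_le _ _).trans ?_
          rw [abs_mul, abs_mul, abs_of_pos (by positivity : (0:ℝ) < 2 ^ d)]
        _ ≤ (2 ^ d * tt θ) * ((C + Kb) * (n:ℝ) ^ (-(3/2) : ℝ) * E) + 2 ^ d * (C * (n:ℝ) ^ (-(5/2) : ℝ) * E) := by gcongr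
        _ = _ := by ring
    · have ei : io ε = 0 := by rw [io, if_neg h]
      rw [ei, zero_mul, sub_zero] at hP
      rw [ei, zero_mul, zero_mul, sub_zero, abs_mul]
      calc _ ≤ (2 ^ d * tt θ) * ((C + Kb) * (n:ℝ) ^ (-(3/2) : ℝ) * E) := by
            gcongr
            exact (hVe'.trans (le_abs_self _)).trans hV0b
        _ ≤ (2 ^ d * tt θ) * ((C + Kb) * (n:ℝ) ^ (-(3/2) : ℝ) * E) + 2 ^ d * (C * (n:ℝ) ^ (-(5/2) : ℝ) * E) := by
            have : 0 ≤ 2 ^ d * (C * (n:ℝ) ^ (-(5/2) : ℝ) * E) := by positivity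
            linarith
        _ = _ := by ring
  · intro hθ
    refine le_trans ?_ hsub'
    push Not at hθ
    obtain ⟨k, hk⟩ := hθ
    have ht1 : 1 ≤ tt θ := by
      refine le_trans ?_ (sq_le_tt θ k)
      rw [← sq_abs]
      have := Real.pi_gt_three
      nlinarith
    rw [abs_mul, abs_mul, abs_of_pos (by positivity : (0:ℝ) < 2 ^ d)]
    calc |io ε| * 2 ^ d * |M| ≤ 1 * 2 ^ d * (Kb * (n:ℝ) ^ (-(3/2) : ℝ) * E) := by gcongr
      _ = 2 ^ d * (Kb * (1 * (n:ℝ) ^ (-(3/2) : ℝ))) * E := by ring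
      _ ≤ 2 ^ d * ((C + Kb) * (tt θ * (n:ℝ) ^ (-(3/2) : ℝ)) + C * (n:ℝ) ^ (-(5/2) : ℝ)) * E := by
          gcongr
          have h1 : Kb * (1 * (n:ℝ) ^ (-(3/2) : ℝ)) ≤ (C + Kb) * (tt θ * (n:ℝ) ^ (-(3/2) : ℝ)) := by
            gcongr; linarith
          have : 0 ≤ C * (n:ℝ) ^ (-(5/2) : ℝ) := by positivity
          linarith


theorem int_step (d n : ℕ) (f : (Fin d → ℝ) → ℝ) (hf : Continuous f) (κ : Fin d → ℝ) (hκ : ∀ k, 0 < κ k) (hn : 2 ≤ n)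
    (M C c : ℝ) (hc : 0 < c)
    (h1 : ∀ θ : Fin d → ℝ, (∀ k, |θ k| ≤ Real.pi / 2) → |f θ - M * Real.exp (-(n * ∑ k, κ k * θ k ^ 2))| ≤ C * Real.exp (-(c * n * tt θ)))
    (h2 : ∀ θ : Fin d → ℝ, (¬ ∀ k, |θ k| ≤ Real.pi / 2) → |M * Real.exp (-(n * ∑ k, κ k * θ k ^ 2))| ≤ C * Real.exp (-(c * n * tt θ))) :
    |∫ θ, f θ ∂(boxm d) - M * ((∏ k, Real.sqrt (Real.pi / κ k)) * Real.sqrt (1 / n) ^ d)| ≤ C * (Real.sqrt (Real.pi / c) ^ d * Real.sqrt (1 / n) ^ d) := by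
  have hn0 : (0:ℝ) < n := by positivity
  obtain ⟨g1, g2⟩ := gauss_prod d (fun k => n * κ k) (fun k => mul_pos hn0 (hκ k))
  obtain ⟨e1, e2⟩ := gauss_prod d (fun _ => c * n) (fun k => mul_pos hc hn0)
  have q1 : ∀ θ : Fin d → ℝ, ∑ k, (n:ℝ) * κ k * θ k ^ 2 = n * ∑ k, κ k * θ k ^ 2 := by
    intro θ; rw [Finset.mul_sum]; refine Finset.sum_congr rfl fun k _ => by ring
  have q2 : ∀ θ : Fin d → ℝ, ∑ k, c * (n:ℝ) * θ k ^ 2 = c * n * tt θ := by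
    intro θ; rw [tt, Finset.mul_sum]
  simp only [q1] at g1 g2
  simp only [q2] at e1 e2
  have p1 : ∏ k, Real.sqrt (Real.pi / (n * κ k)) = (∏ k, Real.sqrt (Real.pi / κ k)) * Real.sqrt (1 / n) ^ d := by
    have : Real.sqrt (1 / n) ^ d = ∏ _k : Fin d, Real.sqrt (1 / n) := by simp
    rw [this, ← Finset.prod_mul_distrib]
    refine Finset.prod_congr rfl fun k _ => ?_
    rw [← Real.sqrt_mul (div_nonneg Real.pi_pos.le (hκ k).le)]
    congr 1
    have := (hκ k).ne'
    field_simp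
  have p2 : ∏ _k : Fin d, Real.sqrt (Real.pi / (c * n)) = Real.sqrt (Real.pi / c) ^ d * Real.sqrt (1 / n) ^ d := by
    rw [Finset.prod_const, ← mul_pow, ← Real.sqrt_mul (by positivity)]
    simp only [Finset.card_univ, Fintype.card_fin]
    congr 2
    field_simp
  rw [p1] at g2
  rw [p2] at e2
  have hms : MeasurableSet (Set.Icc (fun _ : Fin d => -(Real.pi/2)) (fun _ => Real.pi/2)) := measurableSet_Icc
  have hfi := boxm_integrable d f hf
  rw [boxm_eq] at hfi ⊢
  rw [← MeasureTheory.integral_indicator hms]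
  have hfi' := hfi
  change MeasureTheory.IntegrableOn f _ _ at hfi'
  rw [← MeasureTheory.integrable_indicator_iff hms] at hfi'
  rw [← g2, ← e2, ← MeasureTheory.integral_const_mul, ← MeasureTheory.integral_const_mul, ← MeasureTheory.integral_sub hfi' (g1.const_mul M)]
  rw [← Real.norm_eq_abs]
  refine MeasureTheory.norm_integral_le_of_norm_le (e1.const_mul C) (Filter.Eventually.of_forall fun θ => ?_)
  have hmem : θ ∈ Set.Icc (fun _ : Fin d => -(Real.pi/2)) (fun _ => Real.pi/2) ↔ ∀ k, |θ k| ≤ Real.pi / 2 := by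
    simp only [Set.mem_Icc, Pi.le_def, abs_le, ← forall_and]
  rw [Real.norm_eq_abs]
  by_cases h : ∀ k, |θ k| ≤ Real.pi / 2
  · rw [Set.indicator_of_mem (hmem.mpr h)]
    exact h1 θ h
  · rw [Set.indicator_of_notMem (fun h' => h (hmem.mp h')), zero_sub, abs_neg]
    exact h2 θ h

theorem sum_io (d : ℕ) : ∑ ε : Fin d → Bool, io ε = 1 := by
  rw [Finset.sum_eq_single (fun _ => true)]
  · simp [io]
  · intro b _ hb
    rw [io, if_neg]
    intro h; exact hb (funext h)
  · simp

theorem walk_asym (d : ℕ) (S : Finset (Fin (d + 1) → ℤ)) (w : (Fin (d + 1) → ℤ) → ℝ)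
    (hstep : ∀ i ∈ S, (∀ j, i j = -1 ∨ i j = 0 ∨ i j = 1) ∧ i ≠ 0)
    (hw : ∀ i ∈ S, 0 < w i)
    (hsym : ∀ k : Fin d, SymmetricAxis (d + 1) S w (Fin.castSucc k))
    (hfwd : ∀ k : Fin (d + 1), ∃ i ∈ S, i k = 1)
    (A B Q ρ : ℝ) (hA : A = ∑ i ∈ S.filter (fun i => i (Fin.last d) = -1), w i)
    (hB : B = ∑ i ∈ S.filter (fun i => i (Fin.last d) = 1), w i)
    (hQ : Q = ∑ i ∈ S.filter (fun i => i (Fin.last d) = 0), w i)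
    (hB0 : 0 < B) (hAB : B < A) (hQ0 : 0 ≤ Q) (hQe : Q = 0 → S.filter (fun i => i (Fin.last d) = 0) = ∅) (hρ : ρ = Real.sqrt (A / B)) :
    ∃ C : ℝ, 0 < C ∧ ∀ n : ℕ, 2 ≤ n →
      |walkWeight (d + 1) S w n / SAt d S w ρ ^ n - (n:ℝ) ^ (-(3/2) : ℝ) * Real.sqrt (1 / n) ^ d * KF Q n (A, B, Q) *
        ((Real.pi ^ d)⁻¹ * ∏ k, Real.sqrt (Real.pi / (BkAt d S w k ρ / SAt d S w ρ)))| ≤ C * (n:ℝ) ^ (-(5/2) : ℝ) * Real.sqrt (1 / n) ^ d := by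
  obtain ⟨C, c, hC, hc, H⟩ := pw_eps d S w hstep hw hsym hfwd A B Q ρ hA hB hQ hB0 hAB hQ0 hQe hρ
  have hAp : 0 < A := by linarith
  have hρ0 : 0 < ρ := by rw [hρ]; positivity
  obtain ⟨hSp, hBp, -⟩ := box_est d S w hstep hw hsym hfwd ρ hρ0
  have hpi := Real.pi_pos
  refine ⟨((2 * Real.pi) ^ d)⁻¹ * (2 ^ d * (C * Real.sqrt (Real.pi / c) ^ d)), by positivity, ?_⟩
  intro n hn
  have hTn : 0 < SAt d S w ρ ^ n := by positivity
  set Z := (n:ℝ) ^ (-(3/2) : ℝ) * KF Q n (A, B, Q) with hZ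
  set R := (∏ k, Real.sqrt (Real.pi / (BkAt d S w k ρ / SAt d S w ρ))) * Real.sqrt (1 / n) ^ d with hR
  have key : ∀ ε : Fin d → Bool, |∫ θ, ((∏ k, (1 + sg (ε k) * Real.cos (θ k))) * Vr (co d S w (-1) (fun k => sg (ε k) * Real.cos (θ k))) (co d S w 0 (fun k => sg (ε k) * Real.cos (θ k))) (co d S w 1 (fun k => sg (ε k) * Real.cos (θ k))) n 0 / SAt d S w ρ ^ n) ∂(boxm d) - io ε * 2 ^ d * Z * R| ≤ C * (n:ℝ) ^ (-(5/2) : ℝ) * (Real.sqrt (Real.pi / c) ^ d * Real.sqrt (1 / n) ^ d) := by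
    intro ε
    refine int_step d n _ ?_ (fun k => BkAt d S w k ρ / SAt d S w ρ) (fun k => div_pos (hBp k) hSp) hn _ _ c hc ?_ ?_
    · have hv := Vr_continuous d _ _ _ (co_continuous d S w (-1)) (co_continuous d S w 0) (co_continuous d S w 1) n 0
      have hy : Continuous (fun θ : Fin d → ℝ => fun k => sg (ε k) * Real.cos (θ k)) := by fun_prop
      exact ((by fun_prop : Continuous (fun θ : Fin d → ℝ => ∏ k, (1 + sg (ε k) * Real.cos (θ k)))).mul (hv.comp hy)).div_const _
    · intro θ hθ
      have := (H n hn ε θ).1 hθ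
      rw [← hZ] at this
      simpa only [mul_assoc] using this
    · intro θ hθ
      have := (H n hn ε θ).2 hθ
      rw [← hZ] at this
      simpa only [mul_assoc] using this
  rw [walk_formula d S w hstep hsym n, EE]
  simp only [MeasureTheory.integral_div] at key
  have e1 : (n:ℝ) ^ (-(3/2) : ℝ) * Real.sqrt (1 / n) ^ d * KF Q n (A, B, Q) *
        ((Real.pi ^ d)⁻¹ * ∏ k, Real.sqrt (Real.pi / (BkAt d S w k ρ / SAt d S w ρ))) = ((2 * Real.pi) ^ d)⁻¹ * ∑ ε : Fin d → Bool, io ε * 2 ^ d * Z * R := by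
    simp only [mul_assoc]
    rw [← Finset.sum_mul, sum_io, hZ, hR, mul_pow]
    field_simp
  rw [e1, mul_div_assoc, ← mul_sub, Finset.sum_div, ← Finset.sum_sub_distrib, abs_mul, abs_of_pos (by positivity : 0 < ((2 * Real.pi) ^ d)⁻¹)]
  have h3 : |∑ ε : Fin d → Bool, ((∫ θ, ((∏ k, (1 + sg (ε k) * Real.cos (θ k))) * Vr (co d S w (-1) (fun k => sg (ε k) * Real.cos (θ k))) (co d S w 0 (fun k => sg (ε k) * Real.cos (θ k))) (co d S w 1 (fun k => sg (ε k) * Real.cos (θ k))) n 0) ∂(boxm d)) / SAt d S w ρ ^ n - io ε * 2 ^ d * Z * R)| ≤ 2 ^ d * (C * (n:ℝ) ^ (-(5/2) : ℝ) * (Real.sqrt (Real.pi / c) ^ d * Real.sqrt (1 / n) ^ d)) := by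
    refine (Finset.abs_sum_le_sum_abs _ _).trans ((Finset.sum_le_sum fun ε _ => key ε).trans ?_)
    simp
  refine (mul_le_mul_of_nonneg_left h3 (by positivity)).trans (le_of_eq ?_)
  ring


theorem const_id (d : ℕ) (T A B ρ P : ℝ) (hT : 0 < T) (hA : 0 < A) (hB : 0 < B) (hρ : 0 < ρ) (hP : 0 < P) (h : ρ ^ 2 = A / B) :
    T * ρ / (2 * Real.pi ^ (((d : ℝ) + 1) / 2) * A) * Real.sqrt (T ^ (d + 1) / (ρ * P * B)) =
      (Real.pi ^ d)⁻¹ * Real.sqrt ((Real.pi * T) ^ d / P) * (Real.sqrt (2 / Real.pi) * (2 * (B * ρ) / T) ^ (-(3/2) : ℝ)) := by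
  have hpi := Real.pi_pos
  have hAe : A = B * ρ ^ 2 := by rw [h]; field_simp
  have e1 : Real.pi ^ (((d : ℝ) + 1) / 2) = Real.sqrt (Real.pi ^ (d + 1)) := by
    rw [Real.sqrt_eq_rpow, ← Real.rpow_natCast, ← Real.rpow_mul hpi.le]
    congr 1; push_cast; ring
  have e2 : (2 * (B * ρ) / T) ^ (-(3/2) : ℝ) = T / (2 * (B * ρ)) * Real.sqrt (T / (2 * (B * ρ))) := by
    have hz : 0 < T / (2 * (B * ρ)) := by positivity
    rw [Real.sqrt_eq_rpow, Real.rpow_neg (by positivity), ← Real.inv_rpow (by positivity), inv_div]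
    nth_rewrite 2 [← Real.rpow_one (T / (2 * (B * ρ)))]
    rw [← Real.rpow_add hz]; norm_num
  have e3 : Real.sqrt ((Real.pi * T) ^ d / P) * Real.sqrt (2 / Real.pi) * Real.sqrt (T / (2 * (B * ρ))) * Real.sqrt (Real.pi ^ (d + 1)) =
      Real.pi ^ d * Real.sqrt (T ^ (d + 1) / (ρ * P * B)) := by
    rw [← Real.sqrt_mul (by positivity), ← Real.sqrt_mul (by positivity), ← Real.sqrt_mul (by positivity)]
    have : (Real.pi * T) ^ d / P * (2 / Real.pi) * (T / (2 * (B * ρ))) * Real.pi ^ (d + 1) = (Real.pi ^ d) ^ 2 * (T ^ (d + 1) / (ρ * P * B)) := by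
      rw [mul_pow]
      field_simp
      ring
    rw [this, Real.sqrt_mul (by positivity), Real.sqrt_sq (by positivity)]
  have hs : 0 < Real.sqrt (Real.pi ^ (d + 1)) := by positivity
  have hpd : 0 < Real.pi ^ d := by positivity
  have e4 : Real.sqrt (T ^ (d + 1) / (ρ * P * B)) = (Real.pi ^ d)⁻¹ * (Real.sqrt ((Real.pi * T) ^ d / P) * Real.sqrt (2 / Real.pi) * Real.sqrt (T / (2 * (B * ρ))) * Real.sqrt (Real.pi ^ (d + 1))) := by
    rw [e3]; field_simp
  rw [e4, e1, e2, hAe]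
  field_simp

theorem n_exp (d n : ℕ) (hn : 2 ≤ n) : (n:ℝ) ^ (-((d : ℝ) + 1) / 2 - 1) = (n:ℝ) ^ (-(3/2) : ℝ) * Real.sqrt (1 / n) ^ d := by
  have hn0 : (0:ℝ) < n := by positivity
  rw [one_div, Real.sqrt_inv, Real.sqrt_eq_rpow, ← Real.rpow_neg hn0.le, ← Real.rpow_natCast, ← Real.rpow_mul hn0.le, ← Real.rpow_add hn0]
  congr 1; ring

theorem final_rel (s T m K D C k0 n5 : ℝ) (n : ℕ) (hn : 2 ≤ n) (hT : 0 < T) (hm : 0 ≤ m) (hD : 0 < D) (hC : 0 < C) (hk : 0 < k0) (hK : k0 ≤ K)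
    (h5 : n5 = m / n) (h : |s / T - m * K * D| ≤ C * n5) :
    |s - T * m * (D * K)| ≤ C / (k0 * D) / n * |T * m * (D * K)| := by
  have hn0 : (0:ℝ) < n := by positivity
  have hK0 : 0 < K := by linarith
  have e : s - T * m * (D * K) = T * (s / T - m * K * D) := by field_simp
  rw [e, abs_mul, abs_of_pos hT, abs_of_nonneg (by positivity : 0 ≤ T * m * (D * K))]
  calc T * |s / T - m * K * D| ≤ T * (C * n5) := by gcongr
    _ = T * (C * (m / n)) := by rw [h5]
    _ = C / (k0 * D) / n * (T * m * (D * k0)) := by field_simp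
    _ ≤ _ := by gcongr

/-- Negative drift asymptotics (Melczer–Wilson) for a mostly symmetric step set in
dimension `d+1` (symmetric over the first `d` axes), with negative drift
`B(1) - A(1) < 0`, where `ρ = √(A(1)/B(1))`.  If `Q ≠ 0` then
`s_n = S(1,…,1,ρ)^n n^{-(d+1)/2-1} C_ρ (1 + O(1/n))`, and if `Q = 0` then
`s_n = n^{-(d+1)/2-1} [S(1,…,1,ρ)^n C_ρ + S(1,…,1,-ρ)^n C_{-ρ}] (1 + O(1/n))`. -/
theorem mostly_symmetric_negative_drift_asymptotics
    (d : ℕ) (S : Finset (Fin (d + 1) → ℤ)) (w : (Fin (d + 1) → ℤ) → ℝ)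
    (hstep : ∀ i ∈ S, (∀ j, i j = -1 ∨ i j = 0 ∨ i j = 1) ∧ i ≠ 0)
    (hw : ∀ i ∈ S, 0 < w i)
    (hsym : ∀ k : Fin d, SymmetricAxis (d + 1) S w (Fin.castSucc k))
    (hfwd : ∀ k : Fin (d + 1), ∃ i ∈ S, i k = 1)
    (hbwd : ∀ k : Fin (d + 1), ∃ i ∈ S, i k = -1)
    (hdrift : (∑ i ∈ S.filter fun i => i (Fin.last d) = 1, w i)
        < ∑ i ∈ S.filter fun i => i (Fin.last d) = -1, w i) :
    (((S.filter fun i => i (Fin.last d) = 0).Nonempty) →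
      ∃ C : ℝ, ∀ᶠ n : ℕ in atTop,
        |walkWeight (d + 1) S w n -
            SAt d S w (Real.sqrt ((∑ i ∈ S.filter fun i => i (Fin.last d) = -1, w i) /
                  ∑ i ∈ S.filter fun i => i (Fin.last d) = 1, w i)) ^ n *
              (n : ℝ) ^ (-((d : ℝ) + 1) / 2 - 1) *
              Cconst d S w (Real.sqrt ((∑ i ∈ S.filter fun i => i (Fin.last d) = -1, w i) /
                  ∑ i ∈ S.filter fun i => i (Fin.last d) = 1, w i))|
          ≤ C / n *
            |SAt d S w (Real.sqrt ((∑ i ∈ S.filter fun i => i (Fin.last d) = -1, w i) /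
                  ∑ i ∈ S.filter fun i => i (Fin.last d) = 1, w i)) ^ n *
              (n : ℝ) ^ (-((d : ℝ) + 1) / 2 - 1) *
              Cconst d S w (Real.sqrt ((∑ i ∈ S.filter fun i => i (Fin.last d) = -1, w i) /
                  ∑ i ∈ S.filter fun i => i (Fin.last d) = 1, w i))|) ∧
    (((S.filter fun i => i (Fin.last d) = 0) = ∅) →
      ∃ C : ℝ, ∀ᶠ n : ℕ in atTop,
        |walkWeight (d + 1) S w n -
            (n : ℝ) ^ (-((d : ℝ) + 1) / 2 - 1) *
              (SAt d S w (Real.sqrt ((∑ i ∈ S.filter fun i => i (Fin.last d) = -1, w i) /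
                    ∑ i ∈ S.filter fun i => i (Fin.last d) = 1, w i)) ^ n *
                Cconst d S w (Real.sqrt ((∑ i ∈ S.filter fun i => i (Fin.last d) = -1, w i) /
                    ∑ i ∈ S.filter fun i => i (Fin.last d) = 1, w i)) +
              SAt d S w (-Real.sqrt ((∑ i ∈ S.filter fun i => i (Fin.last d) = -1, w i) /
                    ∑ i ∈ S.filter fun i => i (Fin.last d) = 1, w i)) ^ n *
                Cconst d S w (-Real.sqrt ((∑ i ∈ S.filter fun i => i (Fin.last d) = -1, w i) /
                    ∑ i ∈ S.filter fun i => i (Fin.last d) = 1, w i)))|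
          ≤ C / n *
            |(n : ℝ) ^ (-((d : ℝ) + 1) / 2 - 1) *
              (SAt d S w (Real.sqrt ((∑ i ∈ S.filter fun i => i (Fin.last d) = -1, w i) /
                    ∑ i ∈ S.filter fun i => i (Fin.last d) = 1, w i)) ^ n *
                Cconst d S w (Real.sqrt ((∑ i ∈ S.filter fun i => i (Fin.last d) = -1, w i) /
                    ∑ i ∈ S.filter fun i => i (Fin.last d) = 1, w i)) +
              SAt d S w (-Real.sqrt ((∑ i ∈ S.filter fun i => i (Fin.last d) = -1, w i) /
                    ∑ i ∈ S.filter fun i => i (Fin.last d) = 1, w i)) ^ n *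
                Cconst d S w (-Real.sqrt ((∑ i ∈ S.filter fun i => i (Fin.last d) = -1, w i) /
                    ∑ i ∈ S.filter fun i => i (Fin.last d) = 1, w i)))|) := by
  set A := ∑ i ∈ S.filter fun i => i (Fin.last d) = -1, w i with hA
  set B := ∑ i ∈ S.filter fun i => i (Fin.last d) = 1, w i with hB
  set ρ := Real.sqrt (A / B) with hρ
  obtain ⟨Q, hQ⟩ : ∃ Q, Q = ∑ i ∈ S.filter (fun i => i (Fin.last d) = 0), w i := ⟨_, rfl⟩
  have hB0 : 0 < B := by
    rw [hB]
    obtain ⟨i, hi, hi1⟩ := hfwd (Fin.last d)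
    exact Finset.sum_pos (fun i hi => hw i (Finset.mem_filter.mp hi).1) ⟨i, Finset.mem_filter.mpr ⟨hi, hi1⟩⟩
  have hAp : 0 < A := by linarith
  have hQpos : (S.filter fun i => i (Fin.last d) = 0).Nonempty → 0 < Q := by
    intro h
    rw [hQ]
    exact Finset.sum_pos (fun i hi => hw i (Finset.mem_filter.mp hi).1) h
  have hQ0 : 0 ≤ Q := by
    rw [hQ]
    exact Finset.sum_nonneg (fun i hi => (hw i (Finset.mem_filter.mp hi).1).le)
  have hQe : Q = 0 → S.filter (fun i => i (Fin.last d) = 0) = ∅ := by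
    intro h
    by_contra hne
    have := hQpos (Finset.nonempty_iff_ne_empty.mpr hne)
    linarith
  have hρ0 : 0 < ρ := by rw [hρ]; positivity
  obtain ⟨hT, hb, -⟩ := box_est d S w hstep hw hsym hfwd ρ hρ0
  have hSA := SAt_eq d S w hstep
  simp only [← hA, ← hB, ← hQ] at hSA
  obtain ⟨C, hC, H⟩ := walk_asym d S w hstep hw hsym hfwd A B Q ρ hA hB hQ hB0 hdrift hQ0 hQe hρ
  have hρ2 : ρ ^ 2 = A / B := by rw [hρ, Real.sq_sqrt (by positivity)]
  have hAe : A = B * ρ ^ 2 := by rw [hρ2]; field_simp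
  have hBA : Real.sqrt (B / A) = 1 / ρ := by
    rw [hρ, ← inv_div, Real.sqrt_inv, one_div]
  have hABs : Real.sqrt (A * B) = B * ρ := by
    rw [hAe, show B * ρ ^ 2 * B = (B * ρ) ^ 2 by ring, Real.sqrt_sq (by positivity)]
  have hT2 : SAt d S w ρ = Q + 2 * (B * ρ) := by
    rw [hSA, hAe]; field_simp; ring
  have hpz : pz (A, B, Q) = 2 * (B * ρ) / SAt d S w ρ := by
    simp only [pz, hABs, hT2]
  obtain ⟨hx0, hx1⟩ := sqrt_lt_one' A B hB0 hdrift
  rw [hBA] at hx0 hx1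
  have hP : 0 < ∏ k : Fin d, BkAt d S w k ρ := Finset.prod_pos fun k _ => hb k
  obtain ⟨D, hD⟩ : ∃ D, D = (Real.pi ^ d)⁻¹ * ∏ k, Real.sqrt (Real.pi / (BkAt d S w k ρ / SAt d S w ρ)) := ⟨_, rfl⟩
  have hDe : D = (Real.pi ^ d)⁻¹ * Real.sqrt ((Real.pi * SAt d S w ρ) ^ d / ∏ k : Fin d, BkAt d S w k ρ) := by
    rw [hD, ← Real.sqrt_prod]
    · congr 2
      have : (Real.pi * SAt d S w ρ) ^ d = ∏ _k : Fin d, (Real.pi * SAt d S w ρ) := by simp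
      rw [this, ← Finset.prod_div_distrib]
      refine Finset.prod_congr rfl fun k _ => ?_
      rw [div_div_eq_mul_div]
    · intro k _
      have := hb k
      have := Real.pi_pos
      positivity
  have hpi := Real.pi_pos
  have hD0 : 0 < D := by rw [hDe]; positivity
  have hcid := const_id d (SAt d S w ρ) A B ρ _ hT hAp hB0 hρ0 hP hρ2
  rw [← hDe, ← hpz] at hcid
  have hpz0 : 0 < pz (A, B, Q) := by rw [hpz]; positivity
  have hF1 : F1 (A, B, Q) = Real.sqrt (2 / Real.pi) * pz (A, B, Q) ^ (-(3/2) : ℝ) / (1 - 1 / ρ) ^ 2 := by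
    simp only [F1, hBA]
  have hF2 : F2 (A, B, Q) = Real.sqrt (2 / Real.pi) / (1 + 1 / ρ) ^ 2 := by
    simp only [F2, hBA]
  have hne : (1 - 1 / ρ) ≠ 0 := by linarith
  have hF10 : 0 < F1 (A, B, Q) := by
    rw [hF1]
    have : 0 < (1 - 1 / ρ) ^ 2 := by positivity
    positivity
  have hC1 : Cconst d S w ρ = D * F1 (A, B, Q) := by
    rw [hF1, ← mul_div_assoc, ← hcid, Cconst, ← hA, ← hB, div_mul_eq_mul_div, div_mul_eq_mul_div, div_div]
  have h5 : ∀ n : ℕ, 2 ≤ n → (n:ℝ) ^ (-(5/2) : ℝ) * Real.sqrt (1 / n) ^ d = (n:ℝ) ^ (-(3/2) : ℝ) * Real.sqrt (1 / n) ^ d / n := by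
    intro n hn
    have hn0 : (0:ℝ) < n := by positivity
    rw [n3_eq n hn]; field_simp
  constructor
  · intro hne0
    have hQp := hQpos hne0
    refine ⟨C / (F1 (A, B, Q) * D), ?_⟩
    filter_upwards [eventually_ge_atTop 2] with n hn
    have h1 := H n hn
    rw [← hD, mul_assoc C] at h1
    have hK : KF Q n (A, B, Q) = F1 (A, B, Q) := by simp [KF, hQp.ne']
    have h2 := final_rel _ (SAt d S w ρ ^ n) _ _ D C (F1 (A, B, Q)) _ n hn (by positivity) (by positivity) hD0 hC hF10 hK.ge (h5 n hn) h1
    rw [hK] at h2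
    rw [n_exp d n hn, hC1]
    exact h2
  · intro hemp
    have hQz : Q = 0 := by rw [hQ, hemp]; simp
    have hpz1 : pz (A, B, Q) = 1 := by
      rw [hpz, hT2, hQz, zero_add]; field_simp
    have hlast : ∀ i ∈ S, (-ρ) ^ (i (Fin.last d)) = -(ρ ^ (i (Fin.last d))) := by
      intro i hi
      rcases (hstep i hi).1 (Fin.last d) with h | h | h
      · rw [h, zpow_neg, zpow_neg, zpow_one, zpow_one, inv_neg]
      · exfalso
        have : i ∈ S.filter fun i => i (Fin.last d) = 0 := Finset.mem_filter.mpr ⟨hi, h⟩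
        rw [hemp] at this
        simp at this
      · rw [h, zpow_one, zpow_one]
    have hSn : SAt d S w (-ρ) = -SAt d S w ρ := by
      unfold SAt
      rw [← Finset.sum_neg_distrib]
      exact Finset.sum_congr rfl fun i hi => by rw [hlast i hi]; ring
    have hBn : ∀ k, BkAt d S w k (-ρ) = -BkAt d S w k ρ := by
      intro k
      unfold BkAt
      rw [← Finset.sum_neg_distrib]
      exact Finset.sum_congr rfl fun i hi => by rw [hlast i (Finset.mem_filter.mp hi).1]; ring
    have hC2 : Cconst d S w (-ρ) = D * F2 (A, B, Q) := by
      rw [hpz1, Real.one_rpow, mul_one] at hcid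
      rw [hF2, ← mul_div_assoc, ← hcid, Cconst, ← hA, ← hB, hSn]
      simp only [hBn]
      have e1 : (-SAt d S w ρ) ^ (d + 1) / (-ρ * (∏ k : Fin d, -BkAt d S w k ρ) * B) = SAt d S w ρ ^ (d + 1) / (ρ * (∏ k : Fin d, BkAt d S w k ρ) * B) := by
        have e2 : ∏ k : Fin d, -BkAt d S w k ρ = (-1) ^ d * ∏ k : Fin d, BkAt d S w k ρ := by
          rw [Finset.prod_neg]; simp
        rw [e2, neg_pow, show -ρ * ((-1) ^ d * ∏ k : Fin d, BkAt d S w k ρ) * B = (-1) ^ (d + 1) * (ρ * (∏ k : Fin d, BkAt d S w k ρ) * B) by ring]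
        exact mul_div_mul_left _ _ (pow_ne_zero _ (by norm_num))
      rw [e1, neg_mul_neg, show (1 - 1 / -ρ) = 1 + 1 / ρ by rw [div_neg]; ring, div_mul_eq_mul_div, div_mul_eq_mul_div, div_div]
    have hF20 : 0 < F2 (A, B, Q) := by rw [hF2]; positivity
    have hF12 : F2 (A, B, Q) < F1 (A, B, Q) := by
      rw [hF1, hF2, hpz1, Real.one_rpow, mul_one]
      apply div_lt_div_of_pos_left (by positivity) (by positivity)
      apply pow_lt_pow_left₀ (by linarith) (by linarith) (by norm_num)
    refine ⟨C / ((F1 (A, B, Q) - F2 (A, B, Q)) * D), ?_⟩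
    filter_upwards [eventually_ge_atTop 2] with n hn
    have h1 := H n hn
    rw [← hD, mul_assoc C] at h1
    have hK : KF Q n (A, B, Q) = F1 (A, B, Q) + (-1) ^ n * F2 (A, B, Q) := by simp [KF, hQz]
    have hKl : F1 (A, B, Q) - F2 (A, B, Q) ≤ KF Q n (A, B, Q) := by
      rw [hK]
      rcases neg_one_pow_eq_or ℝ n with h | h <;> rw [h] <;> linarith
    have h2 := final_rel _ (SAt d S w ρ ^ n) _ _ D C (F1 (A, B, Q) - F2 (A, B, Q)) _ n hn (by positivity) (by positivity) hD0 hC (by linarith) hKl (h5 n hn) h1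
    rw [hK] at h2
    have e : (n:ℝ) ^ (-((d : ℝ) + 1) / 2 - 1) * (SAt d S w ρ ^ n * Cconst d S w ρ + SAt d S w (-ρ) ^ n * Cconst d S w (-ρ)) =
        SAt d S w ρ ^ n * ((n:ℝ) ^ (-(3/2) : ℝ) * Real.sqrt (1 / n) ^ d) * (D * (F1 (A, B, Q) + (-1) ^ n * F2 (A, B, Q))) := by
      rw [n_exp d n hn, hC1, hC2, hSn, neg_pow (SAt d S w ρ)]; ring
    rw [e]
    exact h2

end
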